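/- Stein's lemma for parallel channel discrimination: Let E, F : M_d(ℂ) → M_{d'}(ℂ) be quantum channels. Then the infimum over ε ∈ (0,1) of limsup_{n→∞} (1/n) D_H^ε(E^{⊗n}‖F^{⊗n}) and the infimum over ε ∈ (0,1) of liminf_{n→∞} (1/n) D_H^ε(E^{⊗n}‖F^{⊗n}) are both equal to D^reg(E‖F) in the extended reals, where D_H^ε applied to channels denotes the channel divergence induced by the hypothesis testing divergence. -/

import Mathlib

open scoped Kronecker ComplexOrder

noncomputable section

namespace QCD

attribute [local instance] Classical.propDecidable

variable {n m : Type} [Fintype n] [DecidableEq n] [Fintype m] [DecidableEq m]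

/-- The real part of the trace of a complex matrix. -/
def rtr (A : Matrix n n ℂ) : ℝ := (A.trace).re

/-- A quantum state: positive semidefinite with trace one. -/
def IsState (ρ : Matrix n n ℂ) : Prop := ρ.PosSemidef ∧ ρ.trace = 1

/-- Loewner order: `A ≤ B` iff `B - A` is positive semidefinite. -/
def loewnerLE (A B : Matrix n n ℂ) : Prop := (B - A).PosSemidef

/-- Support containment (for PSD matrices): `ker σ ⊆ ker ρ`. -/
def SuppLE (ρ σ : Matrix n n ℂ) : Prop := ∀ v : n → ℂ, σ.mulVec v = 0 → ρ.mulVec v = 0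

/-- Functional calculus for Hermitian matrices (junk value `0` otherwise). -/
def matFun (f : ℝ → ℝ) (A : Matrix n n ℂ) : Matrix n n ℂ :=
  if hA : A.IsHermitian then
    (hA.eigenvectorUnitary : Matrix n n ℂ) *
      Matrix.diagonal (fun i => (f (hA.eigenvalues i) : ℂ)) *
      (star (hA.eigenvectorUnitary : Matrix n n ℂ))
  else 0

/-- Matrix square root via functional calculus. -/
def msqrt (A : Matrix n n ℂ) : Matrix n n ℂ := matFun Real.sqrt A

/-- Matrix real power taken on the support (`0 ^ t := 0`). -/
def mpow (A : Matrix n n ℂ) (t : ℝ) : Matrix n n ℂ :=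
  matFun (fun x => if x = 0 then 0 else x ^ t) A

/-- Matrix base-2 logarithm on the support. -/
def mlog (A : Matrix n n ℂ) : Matrix n n ℂ := matFun (Real.logb 2) A

/-- Positive part of a Hermitian matrix. -/
def mposPart (A : Matrix n n ℂ) : Matrix n n ℂ := matFun (fun x => max x 0) A

/-- Trace norm. -/
def traceNorm (A : Matrix n m ℂ) : ℝ := rtr (msqrt (A.conjTranspose * A))

/-- Base-2 logarithm as an extended real (`⊥` on nonpositive input). -/
def elog (x : ℝ) : EReal := if x ≤ 0 then ⊥ else ((Real.logb 2 x : ℝ) : EReal)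

/-- Base-2 logarithm of an extended real. -/
def elogE (x : EReal) : EReal := if x = ⊤ then ⊤ else elog x.toReal

/-- `2 ^ x` for an extended real `x`. -/
def epow2 (x : EReal) : EReal :=
  if x = ⊤ then ⊤ else if x = ⊥ then 0 else ((((2:ℝ) ^ x.toReal : ℝ)) : EReal)

/-- Umegaki relative entropy (base 2), `⊤` if the support condition fails. -/
def relEntropy (ρ σ : Matrix n n ℂ) : EReal :=
  if SuppLE ρ σ then ((rtr (ρ * (mlog ρ - mlog σ)) : ℝ) : EReal) else ⊤

/-- Petz–Rényi divergence (base 2). -/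
def petzRenyi (α : ℝ) (ρ σ : Matrix n n ℂ) : EReal :=
  if 1 < α ∧ ¬ SuppLE ρ σ then ⊤
  else (((α - 1)⁻¹ : ℝ) : EReal) * elog (rtr (mpow ρ α * mpow σ (1 - α)))

/-- Geometric (maximal) Rényi divergence (base 2). -/
def geomRenyi (α : ℝ) (ρ σ : Matrix n n ℂ) : EReal :=
  if SuppLE ρ σ then
    (((α - 1)⁻¹ : ℝ) : EReal) *
      elog (rtr (σ * mpow (mpow σ (-(1/2 : ℝ)) * ρ * mpow σ (-(1/2 : ℝ))) α))
  else ⊤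

/-- Max-relative entropy (base 2). -/
def dMax (ρ σ : Matrix n n ℂ) : EReal :=
  sInf {x : EReal | ∃ lam : ℝ, x = (lam : EReal) ∧ loewnerLE ρ ((((2:ℝ) ^ lam : ℝ) : ℂ) • σ)}

/-- Uhlmann fidelity. -/
def fidelity (ρ σ : Matrix n n ℂ) : ℝ := (rtr (msqrt (msqrt σ * ρ * msqrt σ))) ^ 2

/-- Sine (purified) distance. -/
def sineDist (ρ σ : Matrix n n ℂ) : ℝ := Real.sqrt (1 - fidelity ρ σ)

/-- Smoothed max-relative entropy: smoothing over states in the sine-distance ball. -/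
def dMaxSmooth (δ : ℝ) (ρ σ : Matrix n n ℂ) : EReal :=
  ⨅ (ρ' : Matrix n n ℂ) (_ : IsState ρ' ∧ sineDist ρ ρ' ≤ δ), dMax ρ' σ

/-- Hypothesis testing divergence (base 2). -/
def dH (ε : ℝ) (ρ σ : Matrix n n ℂ) : EReal :=
  - elog (sInf {x : ℝ | ∃ T : Matrix n n ℂ,
      T.PosSemidef ∧ ((1 : Matrix n n ℂ) - T).PosSemidef ∧ 1 - ε ≤ rtr (T * ρ) ∧ x = rtr (T * σ)})

/-- The quantity `c_γ(ρ‖σ)`. -/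
def cGamma (γ : ℝ) (ρ σ : Matrix n n ℂ) : EReal :=
  ((γ⁻¹ : ℝ) : EReal) *
    elogE (epow2 ((γ : ℝ) * petzRenyi (1 + γ) ρ σ) +
           epow2 (((-γ : ℝ) : EReal) * petzRenyi (1 - γ) ρ σ) + 1)

/-- Binary entropy (base 2). -/
def binEnt (x : ℝ) : ℝ := -(x * Real.logb 2 x) - (1 - x) * Real.logb 2 (1 - x)

/-- Action of `id_k ⊗ Φ` on block matrices. -/
def blockApply {k : Type} (Φ : Matrix n n ℂ →ₗ[ℂ] Matrix m m ℂ)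
    (M : Matrix (k × n) (k × n) ℂ) : Matrix (k × m) (k × m) ℂ :=
  Matrix.of fun p q => Φ (Matrix.of fun a b => M (p.1, a) (q.1, b)) p.2 q.2

/-- Action of `Φ ⊗ id_k` on block matrices. -/
def blockApplyRight {k : Type} (Φ : Matrix n n ℂ →ₗ[ℂ] Matrix m m ℂ)
    (M : Matrix (n × k) (n × k) ℂ) : Matrix (m × k) (m × k) ℂ :=
  Matrix.of fun p q => Φ (Matrix.of fun a b => M (a, p.2) (b, q.2)) p.1 q.1

/-- Quantum channel: trace preserving and completely positive. -/
def IsQChannel (Φ : Matrix n n ℂ →ₗ[ℂ] Matrix m m ℂ) : Prop :=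
  (∀ M : Matrix n n ℂ, (Φ M).trace = M.trace) ∧
  (∀ k : ℕ, 1 ≤ k → ∀ M : Matrix (Fin k × n) (Fin k × n) ℂ, M.PosSemidef →
    (blockApply Φ M).PosSemidef)

/-- `id_k ⊗ Φ` as a linear map. -/
def blockApplyL (k : Type) (Φ : Matrix n n ℂ →ₗ[ℂ] Matrix m m ℂ) :
    Matrix (k × n) (k × n) ℂ →ₗ[ℂ] Matrix (k × m) (k × m) ℂ where
  toFun := blockApply Φ
  map_add' M N := by
    ext p q
    show Φ (Matrix.of fun a b => (M + N) (p.1, a) (q.1, b)) p.2 q.2 = _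
    have h : (Matrix.of fun a b => (M + N) (p.1, a) (q.1, b)) =
        (Matrix.of fun a b => M (p.1, a) (q.1, b)) +
          (Matrix.of fun a b => N (p.1, a) (q.1, b)) := rfl
    rw [h, map_add]
    rfl
  map_smul' c M := by
    ext p q
    show Φ (Matrix.of fun a b => (c • M) (p.1, a) (q.1, b)) p.2 q.2 = _
    have h : (Matrix.of fun a b => (c • M) (p.1, a) (q.1, b)) =
        c • (Matrix.of fun a b => M (p.1, a) (q.1, b)) := rfl
    rw [h, map_smul]
    rfl

/-- `Φ ⊗ id_k` as a linear map. -/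
def blockApplyRightL (k : Type) (Φ : Matrix n n ℂ →ₗ[ℂ] Matrix m m ℂ) :
    Matrix (n × k) (n × k) ℂ →ₗ[ℂ] Matrix (m × k) (m × k) ℂ where
  toFun := blockApplyRight Φ
  map_add' M N := by
    ext p q
    show Φ (Matrix.of fun a b => (M + N) (a, p.2) (b, q.2)) p.1 q.1 = _
    have h : (Matrix.of fun a b => (M + N) (a, p.2) (b, q.2)) =
        (Matrix.of fun a b => M (a, p.2) (b, q.2)) +
          (Matrix.of fun a b => N (a, p.2) (b, q.2)) := rfl
    rw [h, map_add]
    rfl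
  map_smul' c M := by
    ext p q
    show Φ (Matrix.of fun a b => (c • M) (a, p.2) (b, q.2)) p.1 q.1 = _
    have h : (Matrix.of fun a b => (c • M) (a, p.2) (b, q.2)) =
        c • (Matrix.of fun a b => M (a, p.2) (b, q.2)) := rfl
    rw [h, map_smul]
    rfl

/-- Tensor product of two channels (Kronecker product action). -/
def tensorChannel {n₁ m₁ n₂ m₂ : Type}
    (E₁ : Matrix n₁ n₁ ℂ →ₗ[ℂ] Matrix m₁ m₁ ℂ) (E₂ : Matrix n₂ n₂ ℂ →ₗ[ℂ] Matrix m₂ m₂ ℂ) :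
    Matrix (n₁ × n₂) (n₁ × n₂) ℂ →ₗ[ℂ] Matrix (m₁ × m₂) (m₁ × m₂) ℂ :=
  (blockApplyRightL m₂ E₁).comp (blockApplyL n₁ E₂)

/-- Index type for `k`-fold tensor powers. -/
def tpow (ι : Type) : ℕ → Type
  | 0 => PUnit
  | (k+1) => tpow ι k × ι

def tpowFintype (ι : Type) [Fintype ι] : ∀ k : ℕ, Fintype (tpow ι k)
  | 0 => inferInstanceAs (Fintype PUnit)
  | (k+1) => letI := tpowFintype ι k; inferInstanceAs (Fintype (tpow ι k × ι))

instance (ι : Type) [Fintype ι] (k : ℕ) : Fintype (tpow ι k) := tpowFintype ι k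

def tpowDecEq (ι : Type) [DecidableEq ι] : ∀ k : ℕ, DecidableEq (tpow ι k)
  | 0 => inferInstanceAs (DecidableEq PUnit)
  | (k+1) => letI := tpowDecEq ι k; inferInstanceAs (DecidableEq (tpow ι k × ι))

instance (ι : Type) [DecidableEq ι] (k : ℕ) : DecidableEq (tpow ι k) := tpowDecEq ι k

/-- `k`-fold Kronecker tensor power of a matrix. -/
def tpowMat (ρ : Matrix n n ℂ) : ∀ k : ℕ, Matrix (tpow n k) (tpow n k) ℂ
  | 0 => 1
  | (k+1) => (tpowMat ρ k) ⊗ₖ ρ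

/-- `k`-fold tensor power of a channel. -/
def tpowChannel (Φ : Matrix n n ℂ →ₗ[ℂ] Matrix m m ℂ) :
    ∀ k : ℕ, Matrix (tpow n k) (tpow n k) ℂ →ₗ[ℂ] Matrix (tpow m k) (tpow m k) ℂ
  | 0 => LinearMap.id
  | (k+1) => tensorChannel (tpowChannel Φ k) Φ

/-- Channel divergence induced by a divergence `𝔇` on states:
sup over `k ≥ 1` and input states `ν` on `ℂ^k ⊗ ℂ^d`. -/
def chDiv (𝔇 : ∀ (p : Type) [Fintype p] [DecidableEq p], Matrix p p ℂ → Matrix p p ℂ → EReal)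
    (E F : Matrix n n ℂ →ₗ[ℂ] Matrix m m ℂ) : EReal :=
  ⨆ (k : ℕ) (_ : 1 ≤ k) (ν : Matrix (Fin k × n) (Fin k × n) ℂ) (_ : IsState ν),
    𝔇 (Fin k × m) (blockApply E ν) (blockApply F ν)

/-- The geometric Rényi divergence as a divergence family. -/
def geomD (α : ℝ) : ∀ (p : Type) [Fintype p] [DecidableEq p],
    Matrix p p ℂ → Matrix p p ℂ → EReal :=
  fun _ _ _ => geomRenyi α

/-- The Umegaki relative entropy as a divergence family. -/
def relD : ∀ (p : Type) [Fintype p] [DecidableEq p],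
    Matrix p p ℂ → Matrix p p ℂ → EReal :=
  fun _ _ _ => relEntropy

/-- The hypothesis testing divergence as a divergence family. -/
def dHD (ε : ℝ) : ∀ (p : Type) [Fintype p] [DecidableEq p],
    Matrix p p ℂ → Matrix p p ℂ → EReal :=
  fun _ _ _ => dH ε

/-- Regularized channel relative entropy. -/
def regRelEntropy (E F : Matrix n n ℂ →ₗ[ℂ] Matrix m m ℂ) : EReal :=
  ⨆ (k : ℕ) (_ : 1 ≤ k),
    (((k : ℝ)⁻¹ : ℝ) : EReal) * chDiv relD (tpowChannel E k) (tpowChannel F k)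

end QCD

open scoped Kronecker ComplexOrder

set_option linter.all false
set_option linter.unusedSectionVars false
set_option linter.unusedSimpArgs false
namespace QCD

section OneShot
variable {n : Type} [Fintype n] [DecidableEq n]

/-- Complex diagonal matrix with real entries. -/
def rdiag (l : n → ℝ) : Matrix n n ℂ := Matrix.diagonal (fun i => (l i : ℂ))

lemma rtr_rdiag_mul (l : n → ℝ) (A : Matrix n n ℂ) :
    rtr (rdiag l * A) = ∑ i, l i * (A i i).re := by
  simp [rtr, rdiag, Matrix.trace, Matrix.diagonal_mul]

lemma rtr_diag (l : n → ℝ) (X : Matrix n n ℂ) :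
    rtr (rdiag l * (X.conjTranspose * X)) = ∑ i, ∑ j, l i * Complex.normSq (X j i) := by
  rw [rtr_rdiag_mul]
  refine Finset.sum_congr rfl fun i _ => ?_
  rw [← Finset.mul_sum]
  congr 1
  simp [Matrix.mul_apply, Complex.normSq_apply]

lemma rtr_comm (A B : Matrix n n ℂ) : rtr (A * B) = rtr (B * A) := by
  simp [rtr, Matrix.trace_mul_comm A B]

lemma rtr_add (A B : Matrix n n ℂ) : rtr (A + B) = rtr A + rtr B := by
  simp [rtr]

lemma rtr_sub (A B : Matrix n n ℂ) : rtr (A - B) = rtr A - rtr B := by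
  simp [rtr]

lemma psd_rtr_nonneg {A : Matrix n n ℂ} (hA : A.PosSemidef) : 0 ≤ rtr A :=
  (Complex.nonneg_iff.mp hA.trace_nonneg).1

lemma rdiag_psd {l : n → ℝ} (hl : ∀ i, 0 ≤ l i) : (rdiag l).PosSemidef := by
  apply Matrix.PosSemidef.diagonal
  intro i
  show (0 : ℂ) ≤ ((l i : ℝ) : ℂ)
  exact_mod_cast hl i

/-- trace of a product of a PSD matrix with a spectrally given PSD matrix. -/
lemma rtr_mul_spec_nonneg {A U : Matrix n n ℂ} (hA : A.PosSemidef) {l : n → ℝ}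
    (hl : ∀ i, 0 ≤ l i) : 0 ≤ rtr (A * (U * rdiag l * U.conjTranspose)) := by
  have h : rtr (A * (U * rdiag l * U.conjTranspose))
      = rtr (rdiag l * (U.conjTranspose * A * U)) := by
    rw [rtr_comm, Matrix.mul_assoc, Matrix.mul_assoc, rtr_comm U]
    simp only [Matrix.mul_assoc]
  rw [h, rtr_rdiag_mul]
  refine Finset.sum_nonneg fun i _ => mul_nonneg (hl i) ?_
  exact (Complex.nonneg_iff.mp ((hA.conjTranspose_mul_mul_same U).diag_nonneg (i := i))).1

lemma rtr_sq_spec {H U V : Matrix n n ℂ} (hH : H.conjTranspose = H)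
    (hV : V * V.conjTranspose = 1) (l : n → ℝ) :
    rtr (H * H * (U * rdiag l * U.conjTranspose))
      = ∑ i, ∑ j, l i * Complex.normSq ((V.conjTranspose * H * U) j i) := by
  rw [← rtr_diag]
  have h2 : (V.conjTranspose * H * U).conjTranspose * (V.conjTranspose * H * U)
      = U.conjTranspose * (H * H) * U := by
    simp only [Matrix.conjTranspose_mul, Matrix.conjTranspose_conjTranspose, hH]
    calc U.conjTranspose * (H * V) * (V.conjTranspose * H * U)
        = U.conjTranspose * H * (V * V.conjTranspose) * H * U := by
          simp only [Matrix.mul_assoc]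
      _ = _ := by rw [hV]; simp only [Matrix.mul_assoc, Matrix.mul_one]
  rw [h2, rtr_comm, Matrix.mul_assoc, Matrix.mul_assoc, rtr_comm U]
  simp only [Matrix.mul_assoc]

lemma effect_sub_sq {T : Matrix n n ℂ} (hT : T.PosSemidef) (hT' : (1 - T).PosSemidef) :
    (T - T * T).PosSemidef := by
  have h1 := hT'.conjTranspose_mul_mul_same T
  have h2 := hT.conjTranspose_mul_mul_same (1 - T)
  rw [hT.1.eq] at h1
  rw [hT'.1.eq] at h2
  have h : T - T * T = T * (1 - T) * T + (1 - T) * T * (1 - T) := by noncomm_ring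
  rw [h]
  exact h1.add h2

lemma normSq_add_le (x y : ℂ) :
    Complex.normSq (x + y) ≤ 2 * (Complex.normSq x + Complex.normSq y) := by
  simp only [Complex.normSq_apply, Complex.add_re, Complex.add_im]
  nlinarith [sq_nonneg (x.re - y.re), sq_nonneg (x.im - y.im)]

/-- Nussbaum–Szkoła lower bound. -/
lemma conv_test {U V T : Matrix n n ℂ} (hU : U * U.conjTranspose = 1)
    (hV : V * V.conjTranspose = 1) {l μ : n → ℝ} (hl : ∀ i, 0 ≤ l i) (hμ : ∀ i, 0 ≤ μ i)
    (hT : T.PosSemidef) (hT' : (1 - T).PosSemidef) {c : ℝ} (hc : 0 ≤ c) :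
    (∑ i, ∑ j, min (l i) (c * μ j) * Complex.normSq ((V.conjTranspose * U) j i))
      ≤ 2 * (rtr ((1 - T) * (U * rdiag l * U.conjTranspose))
        + c * rtr (T * (V * rdiag μ * V.conjTranspose))) := by
  have e1 : rtr ((1 - T) * (1 - T) * (U * rdiag l * U.conjTranspose))
      ≤ rtr ((1 - T) * (U * rdiag l * U.conjTranspose)) := by
    have := rtr_mul_spec_nonneg (U := U) (effect_sub_sq hT' (by simpa using hT)) hl
    rw [Matrix.sub_mul, rtr_sub] at this
    linarith
  have e2 : rtr (T * T * (V * rdiag μ * V.conjTranspose))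
      ≤ rtr (T * (V * rdiag μ * V.conjTranspose)) := by
    have := rtr_mul_spec_nonneg (U := V) (effect_sub_sq hT hT') hμ
    rw [Matrix.sub_mul, rtr_sub] at this
    linarith
  rw [rtr_sq_spec hT'.1.eq hV] at e1
  rw [rtr_sq_spec hT.1.eq hU, Finset.sum_comm] at e2
  have e3 : ∀ i j, Complex.normSq ((U.conjTranspose * T * V) i j)
      = Complex.normSq ((V.conjTranspose * T * U) j i) := by
    intro i j
    have : (V.conjTranspose * T * U).conjTranspose = U.conjTranspose * T * V := by
      simp [Matrix.conjTranspose_mul, hT.1.eq, Matrix.mul_assoc]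
    rw [← this, Matrix.conjTranspose_apply]
    simp
  simp only [e3] at e2
  have key : (∑ i, ∑ j, min (l i) (c * μ j) * Complex.normSq ((V.conjTranspose * U) j i))
      ≤ ∑ i, ∑ j, 2 * (l i * Complex.normSq ((V.conjTranspose * (1 - T) * U) j i)
        + c * (μ j * Complex.normSq ((V.conjTranspose * T * U) j i))) := by
    refine Finset.sum_le_sum fun i _ => Finset.sum_le_sum fun j _ => ?_
    have h1 : (V.conjTranspose * U) j i = (V.conjTranspose * (1 - T) * U) j i
        + (V.conjTranspose * T * U) j i := by
      rw [← Matrix.add_apply]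
      rw [← Matrix.add_mul, ← Matrix.mul_add, sub_add_cancel, Matrix.mul_one]
    rw [h1]
    have h2 := normSq_add_le ((V.conjTranspose * (1 - T) * U) j i) ((V.conjTranspose * T * U) j i)
    have h3 : 0 ≤ min (l i) (c * μ j) := le_min (hl i) (mul_nonneg hc (hμ j))
    have h4 := mul_le_mul_of_nonneg_left h2 h3
    have h5 := mul_le_mul_of_nonneg_right (min_le_left (l i) (c * μ j))
      (Complex.normSq_nonneg ((V.conjTranspose * (1 - T) * U) j i))
    have h6 := mul_le_mul_of_nonneg_right (min_le_right (l i) (c * μ j))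
      (Complex.normSq_nonneg ((V.conjTranspose * T * U) j i))
    linarith
  refine key.trans ?_
  simp only [← Finset.mul_sum, Finset.sum_add_distrib] at e1 e2 ⊢
  have := mul_le_mul_of_nonneg_left e2 hc
  linarith

/-- Support projection of the range of a matrix. -/
lemma exists_range_proj (B : Matrix n n ℂ) : ∃ T : Matrix n n ℂ, T.PosSemidef ∧
    (1 - T).PosSemidef ∧ T * B = B ∧ rtr T = B.rank ∧
    (∃ X : Matrix n n ℂ, T = B * X) := by
  have hG : (B * B.conjTranspose).IsHermitian := Matrix.isHermitian_mul_conjTranspose_self B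
  set g := hG.eigenvalues with hg
  set Z : Matrix n n ℂ := (hG.eigenvectorUnitary : Matrix n n ℂ) with hZ
  have hZ1 : Z * Z.conjTranspose = 1 := Matrix.mem_unitaryGroup_iff.mp hG.eigenvectorUnitary.2
  have hZ2 : Z.conjTranspose * Z = 1 := Matrix.mem_unitaryGroup_iff'.mp hG.eigenvectorUnitary.2
  have hs : B * B.conjTranspose = Z * rdiag g * Z.conjTranspose := by
    have := hG.spectral_theorem
    rw [Unitary.conjStarAlgAut_apply] at this
    exact this
  classical
  let T := Z * rdiag (fun i => if g i ≠ 0 then 1 else 0) * Z.conjTranspose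
  have hmul : ∀ a b : n → ℝ, (Z * rdiag a * Z.conjTranspose) * (Z * rdiag b * Z.conjTranspose)
      = Z * rdiag (fun i => a i * b i) * Z.conjTranspose := by
    intro a b
    calc _ = Z * rdiag a * (Z.conjTranspose * Z) * rdiag b * Z.conjTranspose := by
          simp only [Matrix.mul_assoc]
      _ = _ := by
          rw [hZ2, Matrix.mul_one, Matrix.mul_assoc Z]
          simp [rdiag, Matrix.diagonal_mul_diagonal]
  refine ⟨T, ?_, ?_, ?_, ?_, B.conjTranspose * (Z * rdiag (fun i => (g i)⁻¹) * Z.conjTranspose), ?_⟩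
  · exact (rdiag_psd (fun i => by split_ifs <;> simp)).mul_mul_conjTranspose_same Z
  · have : 1 - T = Z * rdiag (fun i => if g i ≠ 0 then 0 else 1) * Z.conjTranspose := by
      have h1 : (1 : Matrix n n ℂ) = Z * 1 * Z.conjTranspose := by rw [Matrix.mul_one, hZ1]
      rw [h1, ← Matrix.sub_mul, ← Matrix.mul_sub]
      congr 2
      ext i j
      by_cases hij : i = j
      · subst hij
        by_cases h : g i = 0 <;> simp [rdiag, h]
      · simp [rdiag, hij, Matrix.one_apply]
    rw [this]
    exact (rdiag_psd (fun i => by split_ifs <;> simp)).mul_mul_conjTranspose_same Z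
  · have h1 : T * (B * B.conjTranspose) = B * B.conjTranspose := by
      rw [hs, hmul]
      congr 3
      funext i
      by_cases h : g i = 0 <;> simp [h]
    have h2 : (T - 1) * (B * B.conjTranspose) = 0 := by
      rw [Matrix.sub_mul, h1, Matrix.one_mul, sub_self]
    rw [Matrix.mul_self_mul_conjTranspose_eq_zero] at h2
    rw [Matrix.sub_mul, Matrix.one_mul] at h2
    exact sub_eq_zero.mp h2
  · rw [← Matrix.rank_self_mul_conjTranspose, hG.rank_eq_card_non_zero_eigs]
    have : rtr T = rtr (rdiag (fun i => if g i ≠ 0 then 1 else 0)) := by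
      show rtr (Z * _ * _) = _
      rw [rtr_comm, ← Matrix.mul_assoc, hZ2, Matrix.one_mul]
    rw [this]
    rw [Fintype.card_subtype]
    simp [rtr, rdiag, Matrix.trace, apply_ite Complex.ofReal, ← Finset.card_filter, hg,
      Finset.sum_ite]
  · rw [← Matrix.mul_assoc, hs, hmul]
    show Z * _ * _ = _
    congr 3
    funext i
    by_cases h : g i = 0 <;> simp [h]

/-- One-shot achievability. -/
lemma exists_test {U V : Matrix n n ℂ} (hV : V * V.conjTranspose = 1)
    {l μ : n → ℝ} (hl : ∀ i, 0 ≤ l i) (I J : Finset n) {c : ℝ} (hc : ∀ j ∈ J, μ j ≤ c)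
    (hc0 : 0 ≤ c) :
    ∃ T : Matrix n n ℂ, T.PosSemidef ∧ (1 - T).PosSemidef ∧
      (∑ i ∈ I, ∑ j ∈ J, l i * Complex.normSq ((V.conjTranspose * U) j i))
        ≤ rtr (T * (U * rdiag l * U.conjTranspose)) ∧
      rtr (T * (V * rdiag μ * V.conjTranspose)) ≤ c * I.card := by
  classical
  have hV2 : V.conjTranspose * V = 1 := mul_eq_one_comm.mp hV
  set W := V.conjTranspose * U with hW
  let DI : Matrix n n ℂ := Matrix.diagonal (fun i => if i ∈ I then 1 else 0)
  let DJ : Matrix n n ℂ := Matrix.diagonal (fun i => if i ∈ J then 1 else 0)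
  let B := DJ * W * DI
  obtain ⟨T, hT, hT', hTB, htr, X, hX⟩ := exists_range_proj B
  have hDJT : DJ * T = T := by
    rw [hX]
    have : DJ * DJ = DJ := by
      simp only [DJ, Matrix.diagonal_mul_diagonal]
      congr 1; funext i; split_ifs <;> simp
    show DJ * (DJ * W * DI * X) = DJ * W * DI * X
    simp only [← Matrix.mul_assoc, this]
  have hTDJ : T * DJ = T := by
    have := congrArg Matrix.conjTranspose hDJT
    rw [Matrix.conjTranspose_mul, hT.1.eq] at this
    have h2 : DJ.conjTranspose = DJ := by
      simp only [DJ, Matrix.diagonal_conjTranspose]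
      congr 1; funext i; simp only [Pi.star_apply]; split_ifs <;> simp
    rwa [h2] at this
  have hTnn : ∀ A : Matrix n n ℂ, ∀ i, 0 ≤ ((A.conjTranspose * T * A) i i).re := fun A i =>
    (Complex.nonneg_iff.mp ((hT.conjTranspose_mul_mul_same A).diag_nonneg (i := i))).1
  refine ⟨V * T * V.conjTranspose, hT.mul_mul_conjTranspose_same V, ?_, ?_, ?_⟩
  · have : 1 - V * T * V.conjTranspose = V * (1 - T) * V.conjTranspose := by
      rw [Matrix.mul_sub, Matrix.sub_mul, Matrix.mul_one, hV]
    rw [this]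
    exact hT'.mul_mul_conjTranspose_same V
  · have h1 : rtr (V * T * V.conjTranspose * (U * rdiag l * U.conjTranspose))
        = rtr (rdiag l * (W.conjTranspose * T * W)) := by
      rw [rtr_comm, Matrix.mul_assoc, Matrix.mul_assoc, rtr_comm U]
      simp only [hW, Matrix.conjTranspose_mul, Matrix.conjTranspose_conjTranspose,
        Matrix.mul_assoc]
    rw [h1, rtr_rdiag_mul]
    have h2 : ∀ i ∈ I, (∑ j ∈ J, l i * Complex.normSq (W j i))
        = l i * ((W.conjTranspose * T * W) i i).re := by
      intro i hi
      have h3 : (W.conjTranspose * T * W) i i = (B.conjTranspose * B) i i := by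
        have h4 : B.conjTranspose * B = DI.conjTranspose * (W.conjTranspose * T * W) * DI := by
          have h0 : B.conjTranspose * B = B.conjTranspose * (T * B) := by rw [hTB]
          rw [h0]
          simp only [B, Matrix.conjTranspose_mul]
          have h2 : DJ.conjTranspose = DJ := by
            simp only [DJ, Matrix.diagonal_conjTranspose]
            congr 1; funext i; simp only [Pi.star_apply]; split_ifs <;> simp
          rw [h2]
          calc DI.conjTranspose * (W.conjTranspose * DJ) * (T * (DJ * W * DI))
              = DI.conjTranspose * W.conjTranspose * ((DJ * T) * DJ) * W * DI := by
                simp only [Matrix.mul_assoc]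
            _ = _ := by rw [hDJT, hTDJ]; simp only [Matrix.mul_assoc]
        rw [h4]
        simp only [DI, Matrix.diagonal_conjTranspose, Matrix.mul_diagonal, Matrix.diagonal_mul,
          Pi.star_apply, if_pos hi]
        simp
      rw [h3, ← Finset.mul_sum]
      congr 1
      simp only [Matrix.mul_apply, Matrix.conjTranspose_apply, Complex.re_sum]
      rw [← Finset.sum_subset (Finset.subset_univ J)]
      · refine Finset.sum_congr rfl fun j hj => ?_
        have : B j i = W j i := by
          simp [B, DI, DJ, Matrix.mul_diagonal, Matrix.diagonal_mul, hi, hj]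
        change _ = (star (B j i) * B j i).re
        rw [this]
        simp [Complex.normSq_apply]
      · intro j _ hj
        have : B j i = 0 := by
          simp [B, DI, DJ, Matrix.mul_diagonal, Matrix.diagonal_mul, hj]
        change (star (B j i) * B j i).re = 0
        rw [this]
        simp
    rw [Finset.sum_congr rfl h2]
    exact Finset.sum_le_sum_of_subset_of_nonneg (Finset.subset_univ I)
      fun i _ _ => mul_nonneg (hl i) (hTnn W i)
  · have h1 : rtr (V * T * V.conjTranspose * (V * rdiag μ * V.conjTranspose))
        = rtr (rdiag μ * T) := by
      rw [rtr_comm]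
      calc _ = rtr (V * (rdiag μ * (V.conjTranspose * V) * T * V.conjTranspose)) := by
            simp only [Matrix.mul_assoc]
        _ = _ := by
          rw [rtr_comm, hV2, Matrix.mul_one, Matrix.mul_assoc, hV2, Matrix.mul_one]
    rw [h1, rtr_rdiag_mul]
    have h2 : ∀ i, μ i * (T i i).re ≤ c * (T i i).re := by
      intro i
      have hnn : 0 ≤ (T i i).re := (Complex.nonneg_iff.mp (hT.diag_nonneg (i := i))).1
      by_cases hi : i ∈ J
      · exact mul_le_mul_of_nonneg_right (hc i hi) hnn
      · have : T i i = 0 := by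
          rw [← hDJT]
          simp [DJ, Matrix.diagonal_mul, hi]
        simp [this]
    calc ∑ i, μ i * (T i i).re ≤ ∑ i, c * (T i i).re := Finset.sum_le_sum fun i _ => h2 i
      _ = c * rtr T := by rw [← Finset.mul_sum]; simp [rtr, Matrix.trace]
      _ ≤ c * I.card := by
        refine mul_le_mul_of_nonneg_left ?_ hc0
        rw [htr]
        have h3 : B.rank ≤ DI.rank := Matrix.rank_mul_le_right _ _
        rw [Matrix.rank_diagonal] at h3
        have h4 : Fintype.card { i // (if i ∈ I then (1:ℂ) else 0) ≠ 0 } = I.card := by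
          rw [Fintype.card_subtype]
          congr 1
          ext i
          simp
        rw [h4] at h3
        exact_mod_cast h3

/-- Spectral decomposition. -/
lemma exists_spec {ρ : Matrix n n ℂ} (h : ρ.PosSemidef) : ∃ (U : Matrix n n ℂ) (l : n → ℝ),
    U * U.conjTranspose = 1 ∧ U.conjTranspose * U = 1 ∧ (∀ i, 0 ≤ l i) ∧
    ρ = U * rdiag l * U.conjTranspose ∧
    mlog ρ = U * rdiag (fun i => Real.logb 2 (l i)) * U.conjTranspose := by
  have hG := h.1
  refine ⟨hG.eigenvectorUnitary, hG.eigenvalues,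
    Matrix.mem_unitaryGroup_iff.mp hG.eigenvectorUnitary.2,
    Matrix.mem_unitaryGroup_iff'.mp hG.eigenvectorUnitary.2, h.eigenvalues_nonneg, ?_, ?_⟩
  · have := hG.spectral_theorem
    rw [Unitary.conjStarAlgAut_apply] at this
    exact this
  · unfold mlog matFun
    rw [dif_pos hG]
    rfl

end OneShot
end QCD

open scoped Kronecker ComplexOrder

set_option linter.all false
set_option linter.unusedSectionVars false
set_option linter.unusedSimpArgs false
namespace QCD

section StateLevel
variable {n : Type} [Fintype n] [DecidableEq n]

/-- Nussbaum–Szkoła overlaps. -/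
def ovl (U V : Matrix n n ℂ) (j i : n) : ℝ := Complex.normSq ((V.conjTranspose * U) j i)

lemma ovl_nonneg (U V : Matrix n n ℂ) (j i : n) : 0 ≤ ovl U V j i := Complex.normSq_nonneg _

lemma ovl_symm (U V : Matrix n n ℂ) (j i : n) : ovl U V j i = ovl V U i j := by
  unfold ovl
  have : (V.conjTranspose * U).conjTranspose = U.conjTranspose * V := by simp
  rw [← this, Matrix.conjTranspose_apply]
  simp

lemma sum_ovl {U V : Matrix n n ℂ} (hU : U.conjTranspose * U = 1)
    (hV : V * V.conjTranspose = 1) (i : n) : ∑ j, ovl U V j i = 1 := by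
  have h : (V.conjTranspose * U).conjTranspose * (V.conjTranspose * U) = 1 := by
    rw [Matrix.conjTranspose_mul, Matrix.conjTranspose_conjTranspose]
    calc _ = U.conjTranspose * (V * V.conjTranspose) * U := by simp only [Matrix.mul_assoc]
      _ = 1 := by rw [hV, Matrix.mul_one, hU]
  have h2 := congrArg Complex.re (congrFun (congrFun h i) i)
  rw [Matrix.mul_apply, Complex.re_sum] at h2
  simp only [Matrix.one_apply_eq, Complex.one_re] at h2
  rw [← h2]
  refine Finset.sum_congr rfl fun j _ => ?_
  rw [Matrix.conjTranspose_apply]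
  simp [ovl, Complex.normSq_apply]

lemma sum_ovl' {U V : Matrix n n ℂ} (hU : U * U.conjTranspose = 1)
    (hV : V.conjTranspose * V = 1) (j : n) : ∑ i, ovl U V j i = 1 := by
  simp only [ovl_symm U V]
  exact sum_ovl hV hU j

lemma rtr_two (U V : Matrix n n ℂ) (l g : n → ℝ) :
    rtr (U * rdiag l * U.conjTranspose * (V * rdiag g * V.conjTranspose))
      = ∑ i, ∑ j, l i * g j * ovl U V j i := by
  have h : rtr (U * rdiag l * U.conjTranspose * (V * rdiag g * V.conjTranspose))
      = rtr (rdiag l * ((V.conjTranspose * U).conjTranspose *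
        (rdiag g * (V.conjTranspose * U)))) := by
    rw [Matrix.mul_assoc, Matrix.mul_assoc, rtr_comm U]
    simp only [Matrix.conjTranspose_mul, Matrix.conjTranspose_conjTranspose, Matrix.mul_assoc]
  rw [h, rtr_rdiag_mul]
  refine Finset.sum_congr rfl fun i _ => ?_
  rw [Matrix.mul_apply, Complex.re_sum, Finset.mul_sum]
  refine Finset.sum_congr rfl fun j _ => ?_
  rw [Matrix.conjTranspose_apply, rdiag, Matrix.diagonal_mul, ovl, Complex.normSq_apply]
  simp
  ring

lemma rtr_spec {U : Matrix n n ℂ} (hU : U.conjTranspose * U = 1) (l : n → ℝ) :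
    rtr (U * rdiag l * U.conjTranspose) = ∑ i, l i := by
  rw [rtr_comm, ← Matrix.mul_assoc, hU, Matrix.one_mul]
  simp [rtr, rdiag, Matrix.trace]

lemma rtr_two_same {U : Matrix n n ℂ} (hU : U.conjTranspose * U = 1) (l g : n → ℝ) :
    rtr (U * rdiag l * U.conjTranspose * (U * rdiag g * U.conjTranspose))
      = ∑ i, l i * g i := by
  rw [rtr_two]
  refine Finset.sum_congr rfl fun i _ => ?_
  simp [ovl, hU, Matrix.one_apply, apply_ite Complex.normSq]

lemma suppLE_iff {U V : Matrix n n ℂ} (hU : U.conjTranspose * U = 1)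
    (hV : V * V.conjTranspose = 1) (l μ : n → ℝ) :
    SuppLE (U * rdiag l * U.conjTranspose) (V * rdiag μ * V.conjTranspose) ↔
      ∀ j, μ j = 0 → ∀ i, l i * ovl U V j i = 0 := by
  have hV2 : V.conjTranspose * V = 1 := mul_eq_one_comm.mp hV
  have conv : ∀ i j, l i * ovl U V j i = 0 ↔ (l i : ℂ) * (U.conjTranspose * V) i j = 0 := by
    intro i j
    rw [ovl_symm, ovl]
    simp
  simp only [conv]
  constructor
  · intro h j hj i
    have h1 : (V * rdiag μ * V.conjTranspose).mulVec (fun a => V a j) = 0 := by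
      funext a
      change ((V * rdiag μ * V.conjTranspose) * V) a j = 0
      rw [Matrix.mul_assoc, hV2, Matrix.mul_one, rdiag, Matrix.mul_diagonal]
      simp [hj]
    have h2 := h _ h1
    have h3 : ∀ a, ((U * rdiag l * U.conjTranspose) * V) a j = 0 := fun a => congrFun h2 a
    have h4 : (U.conjTranspose * ((U * rdiag l * U.conjTranspose) * V)) i j = 0 := by
      rw [Matrix.mul_apply]
      exact Finset.sum_eq_zero fun a _ => by rw [h3 a, mul_zero]
    have h5 : U.conjTranspose * ((U * rdiag l * U.conjTranspose) * V)
        = rdiag l * (U.conjTranspose * V) := by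
      simp only [← Matrix.mul_assoc, hU, Matrix.one_mul]
    rw [h5, rdiag, Matrix.diagonal_mul] at h4
    exact h4
  · intro h v hv
    set y := V.conjTranspose.mulVec v with hy
    have hvy : v = V.mulVec y := by rw [hy, Matrix.mulVec_mulVec, hV, Matrix.one_mulVec]
    have h1 : ∀ j, (μ j : ℂ) * y j = 0 := by
      intro j
      have h2 : (V.conjTranspose).mulVec ((V * rdiag μ * V.conjTranspose).mulVec v)
          = (rdiag μ).mulVec y := by
        rw [hy, Matrix.mulVec_mulVec, Matrix.mulVec_mulVec]
        simp only [← Matrix.mul_assoc, hV2, Matrix.one_mul]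
      rw [hv, Matrix.mulVec_zero] at h2
      have h3 := congrFun h2 j
      rw [rdiag, Matrix.mulVec_diagonal] at h3
      exact h3.symm
    have h2 : (U * rdiag l * U.conjTranspose).mulVec v
        = U.mulVec ((rdiag l).mulVec ((U.conjTranspose * V).mulVec y)) := by
      rw [hvy]
      simp only [Matrix.mulVec_mulVec, Matrix.mul_assoc]
    rw [h2]
    have h3 : (rdiag l).mulVec ((U.conjTranspose * V).mulVec y) = 0 := by
      funext i
      rw [rdiag, Matrix.mulVec_diagonal, Matrix.mulVec, dotProduct, Finset.mul_sum]
      refine Finset.sum_eq_zero fun j _ => ?_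
      rw [← mul_assoc]
      by_cases hj : μ j = 0
      · rw [h j hj i, zero_mul]
      · have := h1 j
        have hj' : (μ j : ℂ) ≠ 0 := by exact_mod_cast hj
        rw [(mul_eq_zero.mp this).resolve_left hj', mul_zero]
    rw [h3, Matrix.mulVec_zero]

lemma spec_trace_one {ρ U : Matrix n n ℂ} {l : n → ℝ} (h : ρ.trace = 1)
    (hU : U.conjTranspose * U = 1) (he : ρ = U * rdiag l * U.conjTranspose) : ∑ i, l i = 1 := by
  rw [← rtr_spec hU, ← he, rtr, h, Complex.one_re]

lemma log_bound {a b : ℝ} (ha : 0 ≤ a) (hb : 0 < b) :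
    -(2 * b) ≤ a * (Real.logb 2 a - Real.logb 2 b) := by
  rcases ha.eq_or_lt with h | h
  · rw [← h]; simp; positivity
  · have h1 : Real.log (b / a) ≤ b / a - 1 := Real.log_le_sub_one_of_pos (by positivity)
    rw [Real.log_div hb.ne' h.ne'] at h1
    have h2 : a * (Real.log b - Real.log a) ≤ b := by
      have := mul_le_mul_of_nonneg_left h1 h.le
      have h3 : a * (b / a - 1) = b - a := by field_simp
      linarith
    have hl2 : 0 < Real.log 2 := Real.log_pos (by norm_num)
    have hl2' : (1:ℝ)/2 ≤ Real.log 2 := by linarith [Real.log_two_gt_d9]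
    have h4 : a * (Real.logb 2 a - Real.logb 2 b)
        = -(a * (Real.log b - Real.log a)) / Real.log 2 := by
      rw [Real.logb, Real.logb]; field_simp; ring
    rw [h4, le_div_iff₀ hl2]
    nlinarith

/-- Weak converse for a pair of states. -/
lemma conv_state {ρ σ : Matrix n n ℂ} (hρ : IsState ρ) (hσ : IsState σ) (hs : SuppLE ρ σ)
    {R : ℝ} (hR : rtr (ρ * (mlog ρ - mlog σ)) ≤ R) {ε : ℝ} (hε : 0 < ε) (hε3 : ε < 1 / 3)
    {T : Matrix n n ℂ} (hT : T.PosSemidef) (hT' : (1 - T).PosSemidef)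
    (hTρ : 1 - ε ≤ rtr (T * ρ)) :
    ε / 2 * (2:ℝ) ^ (-((R + 3) / (1 - 3 * ε))) ≤ rtr (T * σ) := by
  obtain ⟨U, l, hU1, hU2, hl, he, hlog⟩ := exists_spec hρ.1
  obtain ⟨V, μ, hV1, hV2, hμ, he', hlog'⟩ := exists_spec hσ.1
  have hsl := spec_trace_one hρ.2 hU2 he
  have hsμ := spec_trace_one hσ.2 hV2 he'
  rw [he, he', suppLE_iff hU2 hV1] at hs
  have hD : rtr (ρ * (mlog ρ - mlog σ))
      = ∑ i, ∑ j, l i * (Real.logb 2 (l i) - Real.logb 2 (μ j)) * ovl U V j i := by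
    rw [Matrix.mul_sub, rtr_sub, hlog, hlog']
    conv_lhs => rw [he]
    rw [rtr_two_same hU2, rtr_two, ← Finset.sum_sub_distrib]
    refine Finset.sum_congr rfl fun i _ => ?_
    rw [← mul_one (l i * Real.logb 2 (l i)), ← sum_ovl hU2 hV1 i, Finset.mul_sum,
      ← Finset.sum_sub_distrib]
    refine Finset.sum_congr rfl fun j _ => ?_
    ring
  rw [hD] at hR
  -- pointwise lower bound
  have hlow : ∀ i j, -(2 * μ j) * ovl U V j i ≤
      l i * (Real.logb 2 (l i) - Real.logb 2 (μ j)) * ovl U V j i := by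
    intro i j
    rcases (hμ j).eq_or_lt with h | h
    · have h0 := hs j h.symm i
      have : l i * (Real.logb 2 (l i) - Real.logb 2 (μ j)) * ovl U V j i
          = (l i * ovl U V j i) * (Real.logb 2 (l i) - Real.logb 2 (μ j)) := by ring
      rw [this, h0, ← h]; simp
    · exact mul_le_mul_of_nonneg_right (log_bound (hl i) h) (ovl_nonneg _ _ _ _)
  have hsum : ∑ i, ∑ j, 2 * μ j * ovl U V j i = 2 := by
    rw [Finset.sum_comm]
    simp only [← Finset.mul_sum, sum_ovl' hU1 hV2, mul_one, hsμ]
  have hR2 : 0 ≤ R + 2 := by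
    have : ∑ i, ∑ j, -(2 * μ j) * ovl U V j i ≤ R :=
      (Finset.sum_le_sum fun i _ => Finset.sum_le_sum fun j _ => hlow i j).trans hR
    simp only [neg_mul, Finset.sum_neg_distrib, hsum] at this
    linarith
  have h13 : 0 < 1 - 3 * ε := by linarith
  set L := (R + 3) / (1 - 3 * ε) with hL
  have hLpos : 0 < L := div_pos (by linarith) h13
  set c := (2:ℝ) ^ L with hc
  have hcpos : 0 < c := Real.rpow_pos_of_pos (by norm_num) _
  have hmain := conv_test hU1 hV1 hl hμ hT hT' hcpos.le
  rw [← he, ← he', Matrix.sub_mul, Matrix.one_mul, rtr_sub] at hmain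
  have hρ1 : rtr ρ = 1 := by rw [rtr, hρ.2, Complex.one_re]
  -- tail bound
  have htail : ∀ i j, L * l i * ovl U V j i ≤
      L * (min (l i) (c * μ j) * ovl U V j i) +
      (l i * (Real.logb 2 (l i) - Real.logb 2 (μ j)) * ovl U V j i
        + 2 * μ j * ovl U V j i) := by
    intro i j
    have hlo := hlow i j
    have how := ovl_nonneg U V j i
    rcases le_or_gt (l i) (c * μ j) with h | h
    · rw [min_eq_left h]; nlinarith
    · rw [min_eq_right h.le]
      have hA : 0 ≤ L * (c * μ j * ovl U V j i) :=
        mul_nonneg hLpos.le (mul_nonneg (mul_nonneg hcpos.le (hμ j)) how)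
      have hB : 0 ≤ 2 * μ j * ovl U V j i := mul_nonneg (by linarith [hμ j]) how
      have hC : L * l i * ovl U V j i ≤
          l i * (Real.logb 2 (l i) - Real.logb 2 (μ j)) * ovl U V j i := by
        rcases (hμ j).eq_or_lt with h0 | h0
        · have h00 := hs j h0.symm i
          have e1 : l i * (Real.logb 2 (l i) - Real.logb 2 (μ j)) * ovl U V j i
            = (l i * ovl U V j i) * (Real.logb 2 (l i) - Real.logb 2 (μ j)) := by ring
          have e2 : L * l i * ovl U V j i = L * (l i * ovl U V j i) := by ring
          rw [e1, e2, h00]; simp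
        · have hlpos : 0 < l i := lt_trans (mul_pos hcpos h0) h
          have : L ≤ Real.logb 2 (l i) - Real.logb 2 (μ j) := by
            have h1 : Real.logb 2 (c * μ j) ≤ Real.logb 2 (l i) :=
              Real.logb_le_logb_of_le (by norm_num) (mul_pos hcpos h0) h.le
            rw [Real.logb_mul hcpos.ne' h0.ne', hc, Real.logb_rpow (by norm_num) (by norm_num)] at h1
            linarith
          refine mul_le_mul_of_nonneg_right ?_ how
          rw [mul_comm]
          exact mul_le_mul_of_nonneg_left this hlpos.le
      linarith
  have hS := Finset.sum_le_sum fun i (_ : i ∈ Finset.univ) =>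
    Finset.sum_le_sum fun j (_ : j ∈ Finset.univ) => htail i j
  simp only [Finset.sum_add_distrib, ← Finset.mul_sum, mul_assoc] at hS
  have hS1 : ∑ i, l i * ∑ j, ovl U V j i = 1 := by
    simp only [sum_ovl hU2 hV1, mul_one, hsl]
  have hS2 : 2 * ∑ i, ∑ j, μ j * ovl U V j i = 2 := by
    refine Eq.trans ?_ hsum
    simp only [Finset.mul_sum, mul_assoc]
  have hS3 : ∑ i, l i * ∑ j, ((Real.logb 2 (l i) - Real.logb 2 (μ j)) * ovl U V j i) ≤ R := by
    refine le_trans (le_of_eq ?_) hR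
    simp only [Finset.mul_sum, mul_assoc]
  rw [hS1] at hS
  change (∑ i, ∑ j, min (l i) (c * μ j) * ovl U V j i) ≤ _ at hmain
  set G := ∑ i, ∑ j, min (l i) (c * μ j) * ovl U V j i with hG
  have hfin : L * 1 ≤ L * G + (R + 2) := by
    linarith
  have hLR : R + 2 ≤ L * (1 - 3 * ε) := by
    rw [hL, div_mul_cancel₀ _ h13.ne']; linarith
  have hGe : 3 * ε ≤ G := by
    by_contra hcon
    push Not at hcon
    nlinarith
  have hcb : ε / 2 ≤ c * rtr (T * σ) := by
    rw [hρ1] at hmain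
    linarith
  rw [Real.rpow_neg (by norm_num), ← hc]
  rw [← div_eq_mul_inv, div_le_iff₀ hcpos]
  linarith

lemma dH_le_of {ρ σ : Matrix n n ℂ} (hρ : IsState ρ) {ε B : ℝ} (hε : 0 < ε)
    (h : ∀ T : Matrix n n ℂ, T.PosSemidef → (1 - T).PosSemidef → 1 - ε ≤ rtr (T * ρ) →
      (2:ℝ) ^ (-B) ≤ rtr (T * σ)) : dH ε ρ σ ≤ (B : EReal) := by
  unfold dH
  set S := {x : ℝ | ∃ T : Matrix n n ℂ,
      T.PosSemidef ∧ ((1 : Matrix n n ℂ) - T).PosSemidef ∧ 1 - ε ≤ rtr (T * ρ) ∧ x = rtr (T * σ)}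
  have hne : S.Nonempty := by
    refine ⟨rtr (1 * σ), 1, Matrix.PosSemidef.one, by simpa using Matrix.PosSemidef.zero, ?_, rfl⟩
    rw [Matrix.one_mul, rtr, hρ.2]
    simp [hε.le]
  have hle : (2:ℝ) ^ (-B) ≤ sInf S := by
    refine le_csInf hne ?_
    rintro x ⟨T, h1, h2, h3, rfl⟩
    exact h T h1 h2 h3
  have hp : (0:ℝ) < 2 ^ (-B) := Real.rpow_pos_of_pos (by norm_num) _
  have hp2 := hp.trans_le hle
  rw [elog, if_neg (not_le.mpr hp2), ← EReal.coe_neg, EReal.coe_le_coe_iff]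
  have := Real.logb_le_logb_of_le (b := 2) (by norm_num) hp hle
  rw [Real.logb_rpow (by norm_num) (by norm_num)] at this
  linarith

lemma le_dH_of {ρ σ : Matrix n n ℂ} (hσ : σ.PosSemidef) {ε B : ℝ}
    {T : Matrix n n ℂ} (hT : T.PosSemidef) (hT' : (1 - T).PosSemidef) (h1 : 1 - ε ≤ rtr (T * ρ))
    (h2 : rtr (T * σ) ≤ (2:ℝ) ^ (-B)) : (B : EReal) ≤ dH ε ρ σ := by
  unfold dH
  set S := {x : ℝ | ∃ T : Matrix n n ℂ,
      T.PosSemidef ∧ ((1 : Matrix n n ℂ) - T).PosSemidef ∧ 1 - ε ≤ rtr (T * ρ) ∧ x = rtr (T * σ)}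
  obtain ⟨V, μ, hV1, hV2, hμ, he', -⟩ := exists_spec hσ
  have hbdd : BddBelow S := by
    refine ⟨0, ?_⟩
    rintro x ⟨T, h1, h2, h3, rfl⟩
    rw [he']
    exact rtr_mul_spec_nonneg h1 hμ
  have hle : sInf S ≤ (2:ℝ) ^ (-B) := (csInf_le hbdd ⟨T, hT, hT', h1, rfl⟩).trans h2
  rw [elog]
  split_ifs with h0
  · simp
  · push Not at h0
    rw [← EReal.coe_neg, EReal.coe_le_coe_iff]
    have := Real.logb_le_logb_of_le (b := 2) (by norm_num) h0 hle
    rw [Real.logb_rpow (by norm_num) (by norm_num)] at this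
    linarith

lemma dH_le_state {ρ σ : Matrix n n ℂ} (hρ : IsState ρ) (hσ : IsState σ) {R : ℝ}
    (hR : relEntropy ρ σ ≤ (R : EReal)) {ε : ℝ} (hε : 0 < ε) (hε3 : ε < 1 / 3) :
    dH ε ρ σ ≤ (((R + 3) / (1 - 3 * ε) + Real.logb 2 (2 / ε) : ℝ) : EReal) := by
  unfold relEntropy at hR
  split_ifs at hR with hs
  · rw [EReal.coe_le_coe_iff] at hR
    refine dH_le_of hρ hε fun T hT hT' h => ?_
    refine le_trans (le_of_eq ?_) (conv_state hρ hσ hs hR hε hε3 hT hT' h)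
    rw [neg_add, Real.rpow_add (by norm_num), mul_comm]
    congr 1
    rw [Real.rpow_neg (by norm_num), Real.rpow_logb (by norm_num) (by norm_num) (by positivity)]
    rw [inv_div]
  · exact absurd hR (by simp)

end StateLevel
end QCD

open scoped Kronecker ComplexOrder

set_option linter.all false
set_option linter.unusedSectionVars false
set_option linter.unusedSimpArgs false
namespace QCD

section Powers
variable {p : Type} [Fintype p] [DecidableEq p]

lemma sum_tpow_succ {ι : Type} [Fintype ι] {M : Type*} [AddCommMonoid M] (k : ℕ)
    (f : tpow ι (k + 1) → M) :
    ∑ x : tpow ι (k + 1), f x = ∑ x : tpow ι k, ∑ i : ι, f ((x, i) : tpow ι k × ι) :=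
  Fintype.sum_prod_type (f : tpow ι k × ι → M)

lemma sum_tpow_zero {ι : Type} [Fintype ι] {M : Type*} [AddCommMonoid M]
    (f : tpow ι 0 → M) : ∑ x : tpow ι 0, f x = f PUnit.unit :=
  Fintype.sum_unique (ι := PUnit) f

/-- Product weights. -/
def prodw {R : Type} [CommSemiring R] (l : p → R) : ∀ q : ℕ, tpow p q → R
  | 0 => fun _ => 1
  | (q+1) => fun (x : tpow p q × p) => prodw l q x.1 * l x.2

/-- Sums of a letter function. -/
def sumf (g : p → ℝ) : ∀ q : ℕ, tpow p q → ℝ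
  | 0 => fun _ => 0
  | (q+1) => fun (x : tpow p q × p) => sumf g q x.1 + g x.2

lemma prodw_succ {R : Type} [CommSemiring R] (l : p → R) (q : ℕ) (x : tpow p q) (i : p) :
    prodw l (q+1) ((x, i) : tpow p q × p) = prodw l q x * l i := rfl

lemma sumf_succ (g : p → ℝ) (q : ℕ) (x : tpow p q) (i : p) :
    sumf g (q+1) ((x, i) : tpow p q × p) = sumf g q x + g i := rfl

lemma prodw_nonneg {l : p → ℝ} (hl : ∀ i, 0 ≤ l i) : ∀ q x, 0 ≤ prodw l q x
  | 0, _ => zero_le_one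
  | (q+1), x => mul_nonneg (prodw_nonneg hl q x.1) (hl x.2)

lemma sum_prodw (l : p → ℝ) (h : ∑ i, l i = 1) : ∀ q, ∑ x, prodw l q x = 1
  | 0 => by rw [sum_tpow_zero]; rfl
  | (q+1) => by
    rw [sum_tpow_succ]
    simp only [prodw_succ, ← Finset.mul_sum, h, mul_one, sum_prodw l h q]

lemma first_moment (l g : p → ℝ) (h : ∑ i, l i = 1) :
    ∀ q : ℕ, ∑ x, prodw l q x * (sumf g q x - q * ∑ i, l i * g i) = 0
  | 0 => by rw [sum_tpow_zero]; simp [sumf]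
  | (q+1) => by
    rw [sum_tpow_succ]
    simp only [prodw_succ, sumf_succ]
    set m := ∑ i, l i * g i with hm
    have : ∀ x i, prodw l q x * l i * (sumf g q x + g i - ((q+1 : ℕ) : ℝ) * m)
        = (prodw l q x * (sumf g q x - q * m)) * l i + prodw l q x * (l i * g i - l i * m) := by
      intro x i; push_cast; ring
    simp only [this, Finset.sum_add_distrib, ← Finset.mul_sum, Finset.sum_sub_distrib,
      ← Finset.sum_mul, h, mul_one, one_mul]
    rw [first_moment l g h q, ← hm]
    simp

lemma second_moment (l g : p → ℝ) (h : ∑ i, l i = 1) :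
    ∀ q : ℕ, ∑ x, prodw l q x * (sumf g q x - q * ∑ i, l i * g i) ^ 2
      = q * ∑ j, l j * (g j - ∑ i, l i * g i) ^ 2
  | 0 => by rw [sum_tpow_zero]; simp [sumf]
  | (q+1) => by
    rw [sum_tpow_succ]
    simp only [prodw_succ, sumf_succ]
    have ih := second_moment l g h q
    have ih1 := first_moment l g h q
    set m := ∑ i, l i * g i with hm
    have : ∀ x i, prodw l q x * l i * (sumf g q x + g i - ((q+1 : ℕ) : ℝ) * m) ^ 2
        = (prodw l q x * (sumf g q x - q * m) ^ 2) * l i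
          + 2 * (prodw l q x * (sumf g q x - q * m)) * (l i * g i - l i * m)
          + prodw l q x * (l i * (g i - m) ^ 2) := by
      intro x i; push_cast; ring
    simp only [this, Finset.sum_add_distrib, ← Finset.mul_sum, Finset.sum_sub_distrib,
      ← Finset.sum_mul, h, mul_one, one_mul]
    rw [ih, ← hm, sum_prodw l h q]
    push_cast
    ring

lemma weak_law {l : p → ℝ} (g : p → ℝ) (hl : ∀ i, 0 ≤ l i) (h : ∑ i, l i = 1) {δ ε : ℝ}
    (hδ : 0 < δ) (hε : 0 < ε) : ∀ᶠ q : ℕ in Filter.atTop,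
      ∑ x with sumf g q x < q * (∑ i, l i * g i - δ), prodw l q x ≤ ε := by
  set m := ∑ i, l i * g i with hm
  set v := ∑ j, l j * (g j - m) ^ 2 with hv
  have hv0 : 0 ≤ v := Finset.sum_nonneg fun j _ => mul_nonneg (hl j) (sq_nonneg _)
  obtain ⟨N, hN⟩ := exists_nat_gt (v / (δ ^ 2 * ε))
  filter_upwards [Filter.eventually_ge_atTop (N + 1)] with q hq
  have hq1 : (0:ℝ) < q := by exact_mod_cast (by omega : 0 < q)
  have hqN : v / (δ ^ 2 * ε) < q := hN.trans_le (by exact_mod_cast (by omega : N ≤ q))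
  rw [div_lt_iff₀ (by positivity)] at hqN
  have h2 := second_moment l g h q
  rw [← hm, ← hv] at h2
  have h3 : ∑ x with sumf g q x < q * (m - δ), (q * δ) ^ 2 * prodw l q x
      ≤ ∑ x, prodw l q x * (sumf g q x - q * m) ^ 2 := by
    refine le_trans (Finset.sum_le_sum ?_) (Finset.sum_le_sum_of_subset_of_nonneg
      (Finset.filter_subset _ _) fun x _ _ => mul_nonneg (prodw_nonneg hl q x) (sq_nonneg _))
    intro x hx
    rw [Finset.mem_filter] at hx
    have hx2 := hx.2
    rw [mul_comm]
    refine mul_le_mul_of_nonneg_left ?_ (prodw_nonneg hl q x)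
    have : 0 < q * δ := by positivity
    nlinarith
  rw [h2, ← Finset.mul_sum] at h3
  set S := ∑ x with sumf g q x < q * (m - δ), prodw l q x
  by_contra hcon
  push Not at hcon
  have : (q:ℝ) * v < (q * δ) ^ 2 * S := by
    have e : (q * δ) ^ 2 * S = q * (q * (δ ^ 2 * S)) := by ring
    rw [e]
    refine mul_lt_mul_of_pos_left ?_ hq1
    have h5 : δ ^ 2 * ε < δ ^ 2 * S := mul_lt_mul_of_pos_left hcon (by positivity)
    nlinarith
  linarith

lemma tpowMat_succ (A : Matrix p p ℂ) (q : ℕ) : tpowMat A (q+1) = (tpowMat A q) ⊗ₖ A := rfl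

lemma tpowMat_mul (A B : Matrix p p ℂ) : ∀ q, tpowMat (A * B) q = tpowMat A q * tpowMat B q
  | 0 => by simp [tpowMat]
  | (q+1) => by
    rw [tpowMat_succ, tpowMat_mul A B q]
    exact Matrix.mul_kronecker_mul _ _ _ _

lemma tpowMat_conjTranspose (A : Matrix p p ℂ) :
    ∀ q, tpowMat A.conjTranspose q = (tpowMat A q).conjTranspose
  | 0 => by simp [tpowMat]
  | (q+1) => by
    rw [tpowMat_succ, tpowMat_conjTranspose A q]
    exact (Matrix.conjTranspose_kronecker _ _).symm

lemma tpowMat_one : ∀ q, tpowMat (1 : Matrix p p ℂ) q = 1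
  | 0 => rfl
  | (q+1) => by
    rw [tpowMat_succ, tpowMat_one q]
    exact Matrix.one_kronecker_one

lemma tpowMat_rdiag (l : p → ℝ) : ∀ q, tpowMat (rdiag l) q = rdiag (prodw l q)
  | 0 => by
    simp [tpowMat, rdiag, prodw]
  | (q+1) => by
    rw [tpowMat_succ, tpowMat_rdiag l q]
    refine (Matrix.diagonal_kronecker_diagonal _ _).trans ?_
    unfold rdiag
    congr 1
    funext x
    exact (Complex.ofReal_mul _ _).symm

lemma tpow_unit {U : Matrix p p ℂ} (hU : U * U.conjTranspose = 1) (q : ℕ) :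
    tpowMat U q * (tpowMat U q).conjTranspose = 1 := by
  rw [← tpowMat_conjTranspose, ← tpowMat_mul, hU, tpowMat_one]

lemma tpow_spec {ρ U : Matrix p p ℂ} {l : p → ℝ} (he : ρ = U * rdiag l * U.conjTranspose) (q : ℕ) :
    tpowMat ρ q = tpowMat U q * rdiag (prodw l q) * (tpowMat U q).conjTranspose := by
  rw [he, tpowMat_mul, tpowMat_mul, tpowMat_rdiag, tpowMat_conjTranspose]

lemma ovl_tpow_succ (U V : Matrix p p ℂ) (q : ℕ) (y x : tpow p q) (j i : p) :
    ovl (tpowMat U (q+1)) (tpowMat V (q+1)) ((y, j) : tpow p q × p) ((x, i) : tpow p q × p)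
      = ovl (tpowMat U q) (tpowMat V q) y x * ovl U V j i := by
  unfold ovl
  rw [← tpowMat_conjTranspose, ← tpowMat_conjTranspose, ← tpowMat_mul, ← tpowMat_mul,
    ← Complex.normSq_mul]
  rfl

lemma marginal (U V : Matrix p p ℂ) (l : p → ℝ) : ∀ (q : ℕ) (y : tpow p q),
    ∑ x, prodw l q x * ovl (tpowMat U q) (tpowMat V q) y x
      = prodw (fun j => ∑ i, l i * ovl U V j i) q y
  | 0, y => by
    rw [sum_tpow_zero]
    simp [prodw, tpowMat, ovl]
    have h1 : (1 : Matrix (tpow p 0) (tpow p 0) ℂ) y y = 1 := Matrix.one_apply_eq y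
    exact (congrArg Complex.normSq h1).trans (map_one _)
  | (q+1), y => by
    obtain ⟨y, j⟩ := y
    rw [sum_tpow_succ]
    refine Eq.trans ?_ (prodw_succ _ q y j).symm
    rw [← marginal U V l q y, Finset.sum_mul]
    refine Finset.sum_congr rfl fun x _ => ?_
    rw [Finset.mul_sum]
    refine Finset.sum_congr rfl fun i _ => ?_
    have := ovl_tpow_succ U V q y x j i
    rw [prodw_succ]
    refine (congrArg (fun t => prodw l q x * l i * t) this).trans ?_
    ring

lemma prodw_le_rpow {μ f : p → ℝ} (hμ : ∀ j, 0 ≤ μ j) (h : ∀ j, μ j ≤ (2:ℝ) ^ (-f j)) :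
    ∀ q x, prodw μ q x ≤ (2:ℝ) ^ (-sumf f q x)
  | 0, x => by simp [prodw, sumf]
  | (q+1), x => by
    obtain ⟨x, i⟩ := x
    have e1 := prodw_succ μ q x i
    have e2 := sumf_succ f q x i
    refine (le_of_eq e1).trans ?_
    refine le_trans ?_ (le_of_eq (congrArg (fun t => (2:ℝ) ^ (-t)) e2).symm)
    show _ ≤ (2:ℝ) ^ (-(sumf f q x + f i))
    rw [neg_add, Real.rpow_add (by norm_num)]
    exact mul_le_mul (prodw_le_rpow hμ h q x) (h i) (hμ i) (by positivity)

lemma prodw_eq_rpow {l : p → ℝ} (hl : ∀ j, 0 ≤ l j) :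
    ∀ q x, prodw l q x ≠ 0 → prodw l q x = (2:ℝ) ^ (sumf (fun i => Real.logb 2 (l i)) q x)
  | 0, x => by simp [prodw, sumf]
  | (q+1), x => by
    obtain ⟨x, i⟩ := x
    intro h
    have e1 := prodw_succ l q x i
    have e2 := sumf_succ (fun i => Real.logb 2 (l i)) q x i
    have h' : prodw l q x * l i ≠ 0 := fun h0 => h (e1.trans h0)
    refine e1.trans (Eq.trans ?_ (congrArg (fun t => (2:ℝ) ^ t) e2).symm)
    show _ = (2:ℝ) ^ (sumf (fun i => Real.logb 2 (l i)) q x + Real.logb 2 (l i))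
    have hi : l i ≠ 0 := right_ne_zero_of_mul h'
    rw [Real.rpow_add (by norm_num), ← prodw_eq_rpow hl q x (left_ne_zero_of_mul h'),
      Real.rpow_logb (by norm_num) (by norm_num) (lt_of_le_of_ne (hl i) hi.symm)]

/-- Achievability for iid states, in terms of spectral data. -/
lemma stein_spec {ρ σ U V : Matrix p p ℂ} {l μ f : p → ℝ}
    (hU1 : U * U.conjTranspose = 1) (hV1 : V * V.conjTranspose = 1)
    (hl : ∀ i, 0 ≤ l i) (hμ : ∀ i, 0 ≤ μ i) (hsl : ∑ i, l i = 1)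
    (he : ρ = U * rdiag l * U.conjTranspose) (he' : σ = V * rdiag μ * V.conjTranspose)
    (hf : ∀ j, μ j ≤ (2:ℝ) ^ (-f j)) {R : ℝ}
    (hR : R < ∑ j, (∑ i, l i * ovl U V j i) * f j + ∑ i, l i * Real.logb 2 (l i))
    {ε : ℝ} (hε : 0 < ε) : ∀ᶠ q : ℕ in Filter.atTop, ∃ T : Matrix (tpow p q) (tpow p q) ℂ,
      T.PosSemidef ∧ (1 - T).PosSemidef ∧ 1 - ε ≤ rtr (T * tpowMat ρ q) ∧
      rtr (T * tpowMat σ q) ≤ (2:ℝ) ^ (-(q * R)) := by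
  have hU2 : U.conjTranspose * U = 1 := mul_eq_one_comm.mp hU1
  have hV2 : V.conjTranspose * V = 1 := mul_eq_one_comm.mp hV1
  set η : p → ℝ := fun j => ∑ i, l i * ovl U V j i with hη
  have hη0 : ∀ j, 0 ≤ η j := fun j => Finset.sum_nonneg fun i _ =>
    mul_nonneg (hl i) (ovl_nonneg _ _ _ _)
  have hη1 : ∑ j, η j = 1 := by
    rw [hη, Finset.sum_comm]
    simp only [← Finset.mul_sum, sum_ovl hU2 hV1, mul_one, hsl]
  set g : p → ℝ := fun i => Real.logb 2 (l i) with hg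
  set Fm := ∑ j, η j * f j with hFm
  set Sm := ∑ i, l i * g i with hSm
  set δ := (Fm + Sm - R) / 2 with hδ
  have hδ0 : 0 < δ := by
    have : R < Fm + Sm := hR
    rw [hδ]; linarith
  have hε2 : 0 < ε / 2 := by linarith
  filter_upwards [weak_law g hl hsl hδ0 hε2, weak_law f hη0 hη1 hδ0 hε2] with q h1 h2
  rw [← hSm] at h1
  rw [← hFm] at h2
  classical
  let I : Finset (tpow p q) := Finset.univ.filter
    (fun x => prodw l q x ≠ 0 ∧ q * (Sm - δ) ≤ sumf g q x)
  let J : Finset (tpow p q) := Finset.univ.filter (fun y => q * (Fm - δ) ≤ sumf f q y)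
  have hc : ∀ y ∈ J, prodw μ q y ≤ (2:ℝ) ^ (-(q * (Fm - δ))) := by
    intro y hy
    refine (prodw_le_rpow hμ hf q y).trans ?_
    refine Real.rpow_le_rpow_of_exponent_le (by norm_num) ?_
    have := (Finset.mem_filter.mp hy).2
    linarith
  have hI : (I.card : ℝ) ≤ (2:ℝ) ^ (-(q * (Sm - δ))) := by
    have h3 : ∑ x ∈ I, (2:ℝ) ^ (q * (Sm - δ)) ≤ 1 := by
      rw [← sum_prodw l hsl q]
      refine le_trans (Finset.sum_le_sum ?_) (Finset.sum_le_sum_of_subset_of_nonneg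
        (Finset.filter_subset _ _) fun x _ _ => prodw_nonneg hl q x)
      intro x hx
      have hx2 := (Finset.mem_filter.mp hx).2
      rw [prodw_eq_rpow hl q x hx2.1]
      exact Real.rpow_le_rpow_of_exponent_le (by norm_num) hx2.2
    rw [Finset.sum_const, nsmul_eq_mul] at h3
    rw [Real.rpow_neg (by norm_num), ← one_div, le_div_iff₀ (by positivity)]
    exact h3
  obtain ⟨T, hT, hT', hTρ, hTσ⟩ := exists_test (U := tpowMat U q) (tpow_unit hV1 q)
    (prodw_nonneg hl q) I J hc (by positivity)
  refine ⟨T, hT, hT', ?_, ?_⟩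
  · rw [tpow_spec he q]
    refine le_trans ?_ hTρ
    change _ ≤ ∑ i ∈ I, ∑ j ∈ J, prodw l q i * ovl (tpowMat U q) (tpowMat V q) j i
    set w := ovl (tpowMat U q) (tpowMat V q) with hw
    have hwnn : ∀ y x, 0 ≤ prodw l q x * w y x := fun y x =>
      mul_nonneg (prodw_nonneg hl q x) (ovl_nonneg _ _ _ _)
    have hws : ∀ x, ∑ y, w y x = 1 := sum_ovl (by
      rw [← tpowMat_conjTranspose, ← tpowMat_mul, hU2, tpowMat_one]) (tpow_unit hV1 q)
    have htot : ∑ x, ∑ y, prodw l q x * w y x = 1 := by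
      simp only [← Finset.mul_sum, hws, mul_one, sum_prodw l hsl q]
    have hsplit : ∑ x, ∑ y, prodw l q x * w y x ≤
        ∑ x ∈ I, ∑ y ∈ J, prodw l q x * w y x
        + ∑ x with sumf g q x < q * (Sm - δ), prodw l q x
        + ∑ y with sumf f q y < q * (Fm - δ), prodw η q y := by
      have e1 : ∑ x with sumf g q x < q * (Sm - δ), prodw l q x
          = ∑ x, ∑ y, if sumf g q x < q * (Sm - δ) then prodw l q x * w y x else 0 := by
        rw [Finset.sum_filter]
        refine Finset.sum_congr rfl fun x _ => ?_
        split_ifs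
        · rw [← Finset.mul_sum, hws, mul_one]
        · simp
      have e2 : ∑ y with sumf f q y < q * (Fm - δ), prodw η q y
          = ∑ x, ∑ y, if sumf f q y < q * (Fm - δ) then prodw l q x * w y x else 0 := by
        rw [Finset.sum_filter, Finset.sum_comm]
        refine Finset.sum_congr rfl fun y _ => ?_
        split_ifs
        · exact (marginal U V l q y).symm
        · simp
      have e3 : ∑ x ∈ I, ∑ y ∈ J, prodw l q x * w y x
          = ∑ x, ∑ y, if x ∈ I ∧ y ∈ J then prodw l q x * w y x else 0 := by
        simp only [ite_and]
        rw [← Finset.sum_filter_add_sum_filter_not Finset.univ (fun x => x ∈ I)]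
        have z : ∑ x with ¬ x ∈ I, (∑ y, if x ∈ I then if y ∈ J then prodw l q x * w y x
            else 0 else 0) = 0 := by
          refine Finset.sum_eq_zero fun x hx => Finset.sum_eq_zero fun y _ => ?_
          rw [if_neg (Finset.mem_filter.mp hx).2]
        rw [z, add_zero]
        have hfI : Finset.univ.filter (fun x => x ∈ I) = I := by ext; simp
        rw [hfI]
        refine Finset.sum_congr rfl fun x hx => ?_
        simp only [if_pos hx]
        rw [← Finset.sum_filter]
        congr 1
        ext; simp
      rw [e1, e2, e3, ← Finset.sum_add_distrib, ← Finset.sum_add_distrib]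
      refine Finset.sum_le_sum fun x _ => ?_
      rw [← Finset.sum_add_distrib, ← Finset.sum_add_distrib]
      refine Finset.sum_le_sum fun y _ => ?_
      have h0 := hwnn y x
      by_cases hx0 : prodw l q x = 0
      · rw [hx0]; simp
      by_cases hx : sumf g q x < q * (Sm - δ)
      · rw [if_pos hx]
        have : 0 ≤ (if x ∈ I ∧ y ∈ J then prodw l q x * w y x else 0) := by
          split_ifs <;> simp [h0]
        have : 0 ≤ (if sumf f q y < q * (Fm - δ) then prodw l q x * w y x else 0) := by
          split_ifs <;> simp [h0]
        linarith
      · by_cases hy : sumf f q y < q * (Fm - δ)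
        · rw [if_pos hy]
          have : 0 ≤ (if x ∈ I ∧ y ∈ J then prodw l q x * w y x else 0) := by
            split_ifs <;> simp [h0]
          have : 0 ≤ (if sumf g q x < q * (Sm - δ) then prodw l q x * w y x else 0) := by
            split_ifs <;> simp [h0]
          linarith
        · rw [if_neg hx, if_neg hy, if_pos]
          · linarith
          · refine ⟨Finset.mem_filter.mpr ⟨Finset.mem_univ _, hx0, not_lt.mp hx⟩,
              Finset.mem_filter.mpr ⟨Finset.mem_univ _, not_lt.mp hy⟩⟩
    rw [htot] at hsplit
    linarith
  · rw [tpow_spec he' q]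
    refine hTσ.trans ?_
    refine (mul_le_mul_of_nonneg_left hI (by positivity)).trans ?_
    rw [← Real.rpow_add (by norm_num)]
    refine le_of_eq ?_
    congr 1
    rw [hδ]
    ring

/-- Achievability part of the quantum Stein lemma for states. -/
lemma stein_state {ρ σ : Matrix p p ℂ} (hρ : IsState ρ) (hσ : IsState σ) {R : ℝ}
    (hR : (R : EReal) < relEntropy ρ σ) {ε : ℝ} (hε : 0 < ε) :
    ∀ᶠ q : ℕ in Filter.atTop, ∃ T : Matrix (tpow p q) (tpow p q) ℂ,
      T.PosSemidef ∧ (1 - T).PosSemidef ∧ 1 - ε ≤ rtr (T * tpowMat ρ q) ∧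
      rtr (T * tpowMat σ q) ≤ (2:ℝ) ^ (-(q * R)) := by
  obtain ⟨U, l, hU1, hU2, hl, he, hlog⟩ := exists_spec hρ.1
  obtain ⟨V, μ, hV1, hV2, hμ, he', hlog'⟩ := exists_spec hσ.1
  have hsl := spec_trace_one hρ.2 hU2 he
  have hbase : ∀ j, μ j ≠ 0 → μ j ≤ (2:ℝ) ^ (-(-Real.logb 2 (μ j))) := by
    intro j hj
    rw [neg_neg, Real.rpow_logb (by norm_num) (by norm_num) (lt_of_le_of_ne (hμ j) hj.symm)]
  by_cases hs : SuppLE ρ σ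
  · refine stein_spec (f := fun j => -Real.logb 2 (μ j)) hU1 hV1 hl hμ hsl he he' ?_ ?_ hε
    · intro j
      by_cases hj : μ j = 0
      · simp [hj]
      · exact hbase j hj
    · rw [relEntropy, if_pos hs, EReal.coe_lt_coe_iff] at hR
      refine hR.trans_le (le_of_eq ?_)
      rw [Matrix.mul_sub, rtr_sub, hlog, hlog']
      conv_lhs => rw [he]
      rw [rtr_two_same hU2, rtr_two, Finset.sum_comm]
      simp only [mul_neg, Finset.sum_neg_distrib, Finset.sum_mul]
      have : ∀ j i, l i * Real.logb 2 (μ j) * ovl U V j i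
          = l i * ovl U V j i * Real.logb 2 (μ j) := by intros; ring
      simp only [this]
      ring
  · rw [he, he', suppLE_iff hU2 hV1] at hs
    push Not at hs
    obtain ⟨j0, hj0, i0, hi0⟩ := hs
    set b := (∑ j, (∑ i, l i * ovl U V j i) * (-Real.logb 2 (μ j)))
      + ∑ i, l i * Real.logb 2 (l i) with hb
    have hpos : 0 < ∑ i, l i * ovl U V j0 i := by
      refine Finset.sum_pos' (fun i _ => mul_nonneg (hl i) (ovl_nonneg _ _ _ _)) ⟨i0,
        Finset.mem_univ _, lt_of_le_of_ne (mul_nonneg (hl i0) (ovl_nonneg _ _ _ _)) hi0.symm⟩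
    set M := (R + 1 - b) / ∑ i, l i * ovl U V j0 i with hM
    refine stein_spec (f := fun j => -Real.logb 2 (μ j) + if j = j0 then M else 0)
      hU1 hV1 hl hμ hsl he he' ?_ ?_ hε
    · intro j
      by_cases hj : j = j0
      · rw [hj, hj0]; positivity
      · by_cases hj' : μ j = 0
        · rw [hj']; positivity
        · simpa [hj] using hbase j hj'
    · simp only [mul_add, Finset.sum_add_distrib, mul_ite, mul_zero, Finset.sum_ite_eq',
        Finset.mem_univ, if_true]
      have : (∑ i, l i * ovl U V j0 i) * M = R + 1 - b := by
        rw [hM, mul_div_cancel₀ _ hpos.ne']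
      rw [this]
      linarith

end Powers
end QCD

open scoped Kronecker ComplexOrder

set_option linter.all false
namespace QCD

/-- Channels whose ampliations map states to states. -/
def Good {n m : Type} [Fintype n] [Fintype m] (Φ : Matrix n n ℂ →ₗ[ℂ] Matrix m m ℂ) : Prop :=
  ∀ (K : Type) [Fintype K] (M : Matrix (K × n) (K × n) ℂ), M.PosSemidef →
    (blockApply Φ M).PosSemidef ∧ (blockApply Φ M).trace = M.trace

lemma trace_sub_equiv {p q : Type} [Fintype p] [Fintype q] (e : p ≃ q) (M : Matrix q q ℂ) :
    (M.submatrix e e).trace = M.trace := by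
  simp only [Matrix.trace, Matrix.diag, Matrix.submatrix_apply]
  exact Equiv.sum_comp e (fun i => M i i)

lemma good_of_channel {n m : Type} [Fintype n] [DecidableEq n] [Fintype m] [DecidableEq m]
    {Φ : Matrix n n ℂ →ₗ[ℂ] Matrix m m ℂ} (h : IsQChannel Φ) : Good Φ := by
  intro K _ M hM
  constructor
  · rcases isEmpty_or_nonempty K with hK | hK
    · have : blockApply Φ M = 0 := by
        ext p q; exact (hK.false p.1).elim
      rw [this]; exact Matrix.PosSemidef.zero
    · have e := Fintype.equivFin K
      have h1 := h.2 (Fintype.card K) Fintype.card_pos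
        (M.submatrix (e.symm.prodCongr (Equiv.refl n)) (e.symm.prodCongr (Equiv.refl n)))
        (hM.submatrix _)
      have h2 := h1.submatrix (e.prodCongr (Equiv.refl m))
      convert h2 using 1
      ext ⟨k, b⟩ ⟨k', b'⟩
      simp [blockApply]
  · simp only [Matrix.trace, Matrix.diag, Fintype.sum_prod_type]
    refine Finset.sum_congr rfl fun k _ => ?_
    exact h.1 (Matrix.of fun a b => M (k, a) (k, b))

lemma good_tensor {n₁ m₁ n₂ m₂ : Type} [Fintype n₁] [Fintype m₁] [Fintype n₂] [Fintype m₂]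
    {A : Matrix n₁ n₁ ℂ →ₗ[ℂ] Matrix m₁ m₁ ℂ} {B : Matrix n₂ n₂ ℂ →ₗ[ℂ] Matrix m₂ m₂ ℂ}
    (hA : Good A) (hB : Good B) : Good (tensorChannel A B) := by
  intro K _ M hM
  let e1 : (K × n₁) × n₂ ≃ K × (n₁ × n₂) := Equiv.prodAssoc K n₁ n₂
  let e2 : (K × m₂) × n₁ ≃ (K × n₁) × m₂ :=
    { toFun := fun x => ((x.1.1, x.2), x.1.2)
      invFun := fun x => ((x.1.1, x.2), x.1.2)
      left_inv := fun x => rfl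
      right_inv := fun x => rfl }
  let e3 : K × (m₁ × m₂) ≃ (K × m₂) × m₁ :=
    { toFun := fun x => ((x.1, x.2.2), x.2.1)
      invFun := fun x => (x.1.1, (x.2, x.1.2))
      left_inv := fun x => rfl
      right_inv := fun x => rfl }
  obtain ⟨p1, t1⟩ := hB (K × n₁) (M.submatrix e1 e1) (hM.submatrix _)
  obtain ⟨p2, t2⟩ := hA (K × m₂) ((blockApply B (M.submatrix e1 e1)).submatrix e2 e2)
    (p1.submatrix _)
  have key : blockApply (tensorChannel A B) M =
    (blockApply A ((blockApply B (M.submatrix e1 e1)).submatrix e2 e2)).submatrix e3 e3 := rfl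
  rw [key]
  refine ⟨p2.submatrix _, ?_⟩
  rw [trace_sub_equiv, t2, trace_sub_equiv, t1, trace_sub_equiv]

lemma good_tpow {n m : Type} [Fintype n] [Fintype m]
    {Φ : Matrix n n ℂ →ₗ[ℂ] Matrix m m ℂ} (h : Good Φ) : ∀ k, Good (tpowChannel Φ k)
  | 0 => by
    intro K _ M hM
    exact ⟨hM, rfl⟩
  | (k+1) => good_tensor (good_tpow h k) h

def tsplit (ι : Type) (a : ℕ) : ∀ b : ℕ, tpow ι (a + b) ≃ tpow ι a × tpow ι b
  | 0 => (Equiv.prodPUnit (tpow ι a)).symm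
  | (b+1) => ((tsplit ι a b).prodCongr (Equiv.refl ι)).trans
      (Equiv.prodAssoc (tpow ι a) (tpow ι b) ι)

lemma tpow_split {n m : Type} [Fintype n] [Fintype m]
    (Φ : Matrix n n ℂ →ₗ[ℂ] Matrix m m ℂ) (a : ℕ) : ∀ (b : ℕ)
    (M : Matrix (tpow n (a + b)) (tpow n (a + b)) ℂ) (x x' : tpow m (a + b)),
    tpowChannel Φ (a + b) M x x' =
      tensorChannel (tpowChannel Φ a) (tpowChannel Φ b)
        (M.submatrix (tsplit n a b).symm (tsplit n a b).symm) (tsplit m a b x) (tsplit m a b x')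
  | 0 => fun M x x' => rfl
  | (b+1) => fun M x x' => by
    have ih := tpow_split Φ a b
      (Matrix.of fun y y' => Φ (Matrix.of fun c c' =>
        M ((y, c) : tpow n (a+b) × n) ((y', c') : tpow n (a+b) × n))
          (x : tpow m (a+b) × m).2 (x' : tpow m (a+b) × m).2)
      (x : tpow m (a+b) × m).1 (x' : tpow m (a+b) × m).1
    exact ih

lemma tensor_prod {n₁ m₁ n₂ m₂ K K' : Type}
    (A : Matrix n₁ n₁ ℂ →ₗ[ℂ] Matrix m₁ m₁ ℂ) (B : Matrix n₂ n₂ ℂ →ₗ[ℂ] Matrix m₂ m₂ ℂ)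
    (M : Matrix n₁ n₁ ℂ) (N : Matrix n₂ n₂ ℂ) (x x' : m₁ × m₂) :
    tensorChannel A B (Matrix.of fun a a' => M a.1 a'.1 * N a.2 a'.2) x x'
      = A M x.1 x'.1 * B N x.2 x'.2 := by
  have h1 : tensorChannel A B (Matrix.of fun a a' => M a.1 a'.1 * N a.2 a'.2) x x' =
    A (Matrix.of fun a a' => B (Matrix.of fun b b' => M a a' * N b b') x.2 x'.2) x.1 x'.1 := rfl
  rw [h1]
  have h2 : ∀ a a', B (Matrix.of fun b b' => M a a' * N b b') = M a a' • B N := by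
    intro a a'; rw [← map_smul]; rfl
  simp only [h2]
  have h3 : (Matrix.of fun a a' => (M a a' • B N) x.2 x'.2) = (B N x.2 x'.2) • M := by
    ext a a'; simp [mul_comm]
  rw [h3, map_smul]
  simp [mul_comm]

section ach
variable {n m : Type} [Fintype n] [DecidableEq n] [Fintype m] [DecidableEq m]

/-- The pair `ρ, σ` is obtained from the two channels on a common input. -/
def Ach (E F : Matrix n n ℂ →ₗ[ℂ] Matrix m m ℂ) (N : ℕ) {p : Type} (ρ σ : Matrix p p ℂ) : Prop :=
  ∃ (K : Type) (_ : Fintype K) (_ : DecidableEq K) (ν : Matrix (K × tpow n N) (K × tpow n N) ℂ)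
    (e : p ≃ K × tpow m N), IsState ν ∧
    ρ = (blockApply (tpowChannel E N) ν).submatrix e e ∧
    σ = (blockApply (tpowChannel F N) ν).submatrix e e

variable {E F : Matrix n n ℂ →ₗ[ℂ] Matrix m m ℂ}

lemma state_block {n m K : Type} [Fintype n] [DecidableEq n] [Fintype m] [DecidableEq m]
    [Fintype K] [DecidableEq K] {Φ : Matrix n n ℂ →ₗ[ℂ] Matrix m m ℂ} (h : Good Φ)
    {ν : Matrix (K × n) (K × n) ℂ} (hν : IsState ν) : IsState (blockApply Φ ν) :=
  ⟨(h K ν hν.1).1, (h K ν hν.1).2.trans hν.2⟩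

lemma state_sub {p q : Type} [Fintype p] [DecidableEq p] [Fintype q] [DecidableEq q] (e : p ≃ q)
    {M : Matrix q q ℂ} (h : IsState M) : IsState (M.submatrix e e) :=
  ⟨h.1.submatrix _, (trace_sub_equiv e M).trans h.2⟩

lemma Ach.states (hE : Good E) (hF : Good F) {N : ℕ} {p : Type} [Fintype p] [DecidableEq p]
    {ρ σ : Matrix p p ℂ} (h : Ach E F N ρ σ) : IsState ρ ∧ IsState σ := by
  obtain ⟨K, _, _, ν, e, hν, rfl, rfl⟩ := h
  exact ⟨state_sub e (state_block (good_tpow hE N) hν),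
    state_sub e (state_block (good_tpow hF N) hν)⟩

lemma Ach.mul {a b : ℕ} {p q : Type} {ρ σ : Matrix p p ℂ} {ρ' σ' : Matrix q q ℂ}
    (h : Ach E F a ρ σ) (h' : Ach E F b ρ' σ') :
    Ach E F (a + b) (ρ ⊗ₖ ρ') (σ ⊗ₖ σ') := by
  obtain ⟨K, _, _, ν, e, hν, rfl, rfl⟩ := h
  obtain ⟨K', _, _, ν', e', hν', rfl, rfl⟩ := h'
  let f : (K × K') × tpow n (a + b) ≃ (K × tpow n a) × (K' × tpow n b) :=
    ((Equiv.refl (K × K')).prodCongr (tsplit n a b)).trans (Equiv.prodProdProdComm K K' _ _)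
  let g : (K × K') × tpow m (a + b) ≃ (K × tpow m a) × (K' × tpow m b) :=
    ((Equiv.refl (K × K')).prodCongr (tsplit m a b)).trans (Equiv.prodProdProdComm K K' _ _)
  have hst : IsState (ν ⊗ₖ ν') := by
    refine ⟨hν.1.kronecker hν'.1, ?_⟩
    rw [Matrix.trace_kronecker, hν.2, hν'.2, one_mul]
  have key : ∀ Φ : Matrix n n ℂ →ₗ[ℂ] Matrix m m ℂ,
      (blockApply (tpowChannel Φ a) ν).submatrix e e ⊗ₖ
        (blockApply (tpowChannel Φ b) ν').submatrix e' e' =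
      (blockApply (tpowChannel Φ (a + b)) ((ν ⊗ₖ ν').submatrix f f)).submatrix
        ((e.prodCongr e').trans g.symm) ((e.prodCongr e').trans g.symm) := by
    intro Φ
    have k2 : blockApply (tpowChannel Φ (a + b)) ((ν ⊗ₖ ν').submatrix f f) =
        ((blockApply (tpowChannel Φ a) ν) ⊗ₖ (blockApply (tpowChannel Φ b) ν')).submatrix g g := by
      ext ⟨⟨k, k'⟩, x⟩ ⟨⟨l, l'⟩, y⟩
      refine (tpow_split Φ a b _ x y).trans ?_
      refine Eq.trans ?_ (tensor_prod (K := K) (K' := K') (tpowChannel Φ a) (tpowChannel Φ b)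
        (Matrix.of fun a b => ν (k, a) (l, b)) (Matrix.of fun a b => ν' (k', a) (l', b))
        (tsplit m a b x) (tsplit m a b y))
      refine congrArg (fun Q => tensorChannel (tpowChannel Φ a) (tpowChannel Φ b) Q
        (tsplit m a b x) (tsplit m a b y)) ?_
      ext u v
      simp [f, Matrix.kroneckerMap_apply]
    rw [k2]
    ext ⟨i, j⟩ ⟨i', j'⟩
    simp
  exact ⟨K × K', inferInstance, inferInstance, (ν ⊗ₖ ν').submatrix f f,
    (e.prodCongr e').trans g.symm, state_sub f hst, key E, key F⟩

lemma Ach.zero : Ach E F 0 (1 : Matrix PUnit PUnit ℂ) (1 : Matrix PUnit PUnit ℂ) := by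
  refine ⟨PUnit, inferInstance, inferInstance, (1 : Matrix (PUnit × PUnit) (PUnit × PUnit) ℂ),
    (Equiv.prodPUnit PUnit).symm, ?_, ?_, ?_⟩
  · refine ⟨Matrix.PosSemidef.one, ?_⟩
    exact (Matrix.trace_one (n := PUnit × PUnit) (R := ℂ)).trans (by simp)
  · ext i j
    show _ = (1 : Matrix (PUnit × PUnit) (PUnit × PUnit) ℂ) (i, PUnit.unit.{1}) (j, PUnit.unit.{1})
    simp [Matrix.one_apply]
  · ext i j
    show _ = (1 : Matrix (PUnit × PUnit) (PUnit × PUnit) ℂ) (i, PUnit.unit.{1}) (j, PUnit.unit.{1})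
    simp [Matrix.one_apply]

lemma Ach.pow {l : ℕ} {p : Type} [Fintype p] [DecidableEq p] {ρ σ : Matrix p p ℂ}
    (h : Ach E F l ρ σ) : ∀ q, Ach E F (q * l) (tpowMat ρ q) (tpowMat σ q)
  | 0 => by
    rw [Nat.zero_mul]
    exact Ach.zero
  | (q+1) => by
    rw [Nat.succ_mul]
    exact Ach.mul (h.pow q) h

lemma tpow_nonempty [Nonempty n] : ∀ r, Nonempty (tpow n r)
  | 0 => ⟨PUnit.unit⟩
  | (r+1) => by
    obtain ⟨x⟩ := tpow_nonempty r
    obtain ⟨y⟩ := ‹Nonempty n›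
    exact ⟨((x, y) : tpow n r × n)⟩

lemma Ach.exists [Nonempty n] (r : ℕ) : ∃ (p : Type) (_ : Fintype p) (_ : DecidableEq p)
    (ρ σ : Matrix p p ℂ), Ach E F r ρ σ := by
  obtain ⟨x⟩ := tpow_nonempty (n := n) r
  refine ⟨PUnit × tpow m r, inferInstance, inferInstance, _, _, PUnit, inferInstance,
    inferInstance, rdiag (fun i => if i = (PUnit.unit, x) then 1 else 0), Equiv.refl _, ?_, rfl, rfl⟩
  refine ⟨rdiag_psd (fun i => by split_ifs <;> norm_num), ?_⟩
  simp only [rdiag, Matrix.trace, Matrix.diag, Matrix.diagonal_apply_eq]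
  rw [Finset.sum_eq_single (PUnit.unit, x)]
  · simp
  · intro b _ hb
    simp [hb]
  · simp

lemma Ach.le_chDiv (hE : Good E) (hF : Good F) {N : ℕ} {p : Type} [Fintype p] [DecidableEq p]
    {ρ σ T : Matrix p p ℂ} (h : Ach E F N ρ σ) {ε B : ℝ} (hT : T.PosSemidef)
    (hT' : (1 - T).PosSemidef) (h1 : 1 - ε ≤ rtr (T * ρ)) (h2 : rtr (T * σ) ≤ (2:ℝ) ^ (-B)) :
    (B : EReal) ≤ chDiv (dHD ε) (tpowChannel E N) (tpowChannel F N) := by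
  obtain ⟨K, _, _, ν, e, hν, rfl, rfl⟩ := h
  have hK : Nonempty K := by
    by_contra hK
    rw [not_nonempty_iff] at hK
    have := hν.2
    simp [Matrix.trace] at this
  let g := Fintype.equivFin K
  let e1 : Fin (Fintype.card K) × tpow n N ≃ K × tpow n N := g.symm.prodCongr (Equiv.refl _)
  let e2 : Fin (Fintype.card K) × tpow m N ≃ K × tpow m N := g.symm.prodCongr (Equiv.refl _)
  let e3 : Fin (Fintype.card K) × tpow m N ≃ p := e2.trans e.symm
  have hs : IsState (ν.submatrix e1 e1) := state_sub e1 hν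
  have hb : ∀ Φ : Matrix n n ℂ →ₗ[ℂ] Matrix m m ℂ,
      blockApply (tpowChannel Φ N) (ν.submatrix e1 e1) =
      ((blockApply (tpowChannel Φ N) ν).submatrix e e).submatrix e3 e3 := by
    intro Φ
    have : blockApply (tpowChannel Φ N) (ν.submatrix e1 e1) =
      (blockApply (tpowChannel Φ N) ν).submatrix e2 e2 := rfl
    rw [this]
    ext i j
    simp [e3]
  have ht : ∀ M : Matrix p p ℂ, rtr (T.submatrix e3 e3 * M.submatrix e3 e3) = rtr (T * M) := by
    intro M
    rw [Matrix.submatrix_mul_equiv]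
    unfold rtr
    rw [trace_sub_equiv]
  refine le_trans (le_dH_of (ε := ε) (T := T.submatrix e3 e3)
    (ρ := blockApply (tpowChannel E N) (ν.submatrix e1 e1))
    (σ := blockApply (tpowChannel F N) (ν.submatrix e1 e1))
    (state_block (good_tpow hF N) hs).1
    (hT.submatrix _) ?_ ?_ ?_) ?_
  · have := hT'.submatrix e3
    rwa [Matrix.submatrix_sub, Pi.sub_apply, Pi.sub_apply, Matrix.submatrix_one_equiv] at this
  · rw [hb, ht]; exact h1
  · rw [hb, ht]; exact h2
  · unfold chDiv
    exact le_iSup_of_le (Fintype.card K) (le_iSup_of_le Fintype.card_pos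
      (le_iSup_of_le (ν.submatrix e1 e1) (le_iSup_of_le hs le_rfl)))

/-- Linear lower bound from a single-input relative entropy value. -/
lemma ach_bound (hE : Good E) (hF : Good F) [Nonempty n] {l : ℕ} (hl : 1 ≤ l) {p : Type}
    [Fintype p] [DecidableEq p]
    {ρ σ : Matrix p p ℂ} (h : Ach E F l ρ σ) {R ε : ℝ} (hε : 0 < ε)
    (hR : (R : EReal) < relEntropy ρ σ) :
    ∀ᶠ N : ℕ in Filter.atTop, ((((N / l : ℕ) : ℝ) * R : ℝ) : EReal) ≤
      chDiv (dHD ε) (tpowChannel E N) (tpowChannel F N) := by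
  obtain ⟨hρ, hσ⟩ := h.states hE hF
  have hst := stein_state hρ hσ hR hε
  have hdiv : Filter.Tendsto (fun N : ℕ => N / l) Filter.atTop Filter.atTop :=
    Nat.tendsto_div_const_atTop (by omega)
  filter_upwards [hdiv.eventually hst] with N hN
  obtain ⟨T, hT, hT', h1, h2⟩ := hN
  obtain ⟨p', _, _, ρ', σ', hr⟩ := Ach.exists (E := E) (F := F) (N % l)
  obtain ⟨hρ', hσ'⟩ := hr.states hE hF
  have hA : Ach E F N (tpowMat ρ (N / l) ⊗ₖ ρ') (tpowMat σ (N / l) ⊗ₖ σ') := by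
    have := (h.pow (N / l)).mul hr
    rwa [Nat.div_add_mod'] at this
  have htr : ∀ (M : Matrix (tpow p (N / l)) (tpow p (N / l)) ℂ) (τ : Matrix p' p' ℂ),
      τ.trace = 1 → rtr ((T ⊗ₖ (1 : Matrix p' p' ℂ)) * (M ⊗ₖ τ)) = rtr (T * M) := by
    intro M τ hτ
    rw [← Matrix.mul_kronecker_mul, one_mul]
    unfold rtr
    rw [Matrix.trace_kronecker, hτ, mul_one]
  refine hA.le_chDiv hE hF (T := T ⊗ₖ (1 : Matrix p' p' ℂ)) (hT.kronecker Matrix.PosSemidef.one)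
    ?_ ?_ ?_
  · have h3 := hT'.kronecker (Matrix.PosSemidef.one (n := p') (R := ℂ))
    have h4 : ((1 : Matrix (tpow p (N / l)) (tpow p (N / l)) ℂ) - T) ⊗ₖ (1 : Matrix p' p' ℂ)
        = 1 - T ⊗ₖ (1 : Matrix p' p' ℂ) := by
      have h5 := Matrix.one_kronecker_one (α := ℂ) (m := tpow p (N / l)) (n := p')
      rw [← h5]
      ext i j
      simp only [Matrix.kroneckerMap_apply, sub_mul, Matrix.sub_apply]
    rwa [h4] at h3
  · rw [htr _ _ hρ'.2]; exact h1
  · rw [htr _ _ hσ'.2]; exact h2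

end ach
end QCD

open scoped Kronecker ComplexOrder

set_option linter.all false
namespace QCD

lemma ach_part {dA dB : ℕ}
    {E F : Matrix (Fin dA) (Fin dA) ℂ →ₗ[ℂ] Matrix (Fin dB) (Fin dB) ℂ}
    (hE : Good E) (hF : Good F) {ε : ℝ} (hε : 0 < ε) :
    regRelEntropy E F ≤ Filter.liminf (fun k : ℕ => (((k : ℝ)⁻¹ : ℝ) : EReal) *
          chDiv (dHD ε) (tpowChannel E k) (tpowChannel F k)) Filter.atTop := by
  unfold regRelEntropy
  refine iSup_le fun l => iSup_le fun hl => ?_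
  set L := Filter.liminf (fun k : ℕ => (((k : ℝ)⁻¹ : ℝ) : EReal) *
          chDiv (dHD ε) (tpowChannel E k) (tpowChannel F k)) Filter.atTop with hL
  have hl0 : (0:ℝ) < l := by exact_mod_cast hl
  suffices h : chDiv relD (tpowChannel E l) (tpowChannel F l) ≤ ((l : ℝ) : EReal) * L by
    calc _ ≤ (((l : ℝ)⁻¹ : ℝ) : EReal) * (((l : ℝ) : EReal) * L) :=
          mul_le_mul_of_nonneg_left h (by exact_mod_cast (inv_pos.2 hl0).le)
      _ = L := by
          rw [← mul_assoc, ← EReal.coe_mul, inv_mul_cancel₀ hl0.ne', EReal.coe_one, one_mul]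
  unfold chDiv
  refine iSup_le fun k => iSup_le fun hk => iSup_le fun ν => iSup_le fun hν => ?_
  rw [← EReal.ge_of_forall_gt_iff_ge]
  intro R hR
  have hne : Nonempty (Fin dA) := by
    by_contra hK
    rw [not_nonempty_iff] at hK
    obtain ⟨l', rfl⟩ : ∃ l', l = l' + 1 := ⟨l - 1, by omega⟩
    have hem : IsEmpty (Fin k × tpow (Fin dA) (l' + 1)) :=
      ⟨fun x => hK.false (x.2 : tpow (Fin dA) l' × Fin dA).2⟩
    have := hν.2
    simp [Matrix.trace] at this
  have hA : Ach E F l (blockApply (tpowChannel E l) ν) (blockApply (tpowChannel F l) ν) :=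
    ⟨Fin k, inferInstance, inferInstance, ν, Equiv.refl _, hν, rfl, rfl⟩
  have hb := ach_bound hE hF hl hA hε hR
  suffices h : (((R / l : ℝ)) : EReal) ≤ L by
    calc (R : EReal) = ((l : ℝ) : EReal) * ((R / l : ℝ) : EReal) := by
          rw [← EReal.coe_mul]; congr 1; field_simp
      _ ≤ _ := mul_le_mul_of_nonneg_left h (by exact_mod_cast hl0.le)
  have hlim : Filter.Tendsto (fun N : ℕ => (((N:ℝ)⁻¹ * (((N / l : ℕ) : ℝ) * R) : ℝ) : EReal))
      Filter.atTop (nhds ((R / l : ℝ) : EReal)) := by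
    rw [EReal.tendsto_coe]
    have h1 : Filter.Tendsto (fun N : ℕ => ((N:ℝ)⁻¹ * (((N / l : ℕ) : ℝ)))) Filter.atTop
        (nhds ((l:ℝ)⁻¹)) := by
      have h2 : Filter.Tendsto (fun N : ℕ => (l:ℝ)⁻¹ - (N:ℝ)⁻¹) Filter.atTop
          (nhds ((l:ℝ)⁻¹)) := by
        have := (tendsto_const_nhds (x := (l:ℝ)⁻¹)).sub (tendsto_inv_atTop_nhds_zero_nat (𝕜 := ℝ))
        simpa using this
      refine tendsto_of_tendsto_of_tendsto_of_le_of_le' h2 tendsto_const_nhds ?_ ?_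
      · filter_upwards [Filter.eventually_ge_atTop 1] with N hN
        have hN0 : (0:ℝ) < N := by exact_mod_cast hN
        have h3 : N < l * (N / l) + l := by
          have := Nat.div_add_mod N l
          have := Nat.mod_lt N hl
          omega
        have h4 : (N:ℝ) ≤ l * ((N / l : ℕ) : ℝ) + l := by exact_mod_cast h3.le
        rw [← sub_nonneg]
        have : (N:ℝ)⁻¹ * ((N / l : ℕ) : ℝ) - ((l:ℝ)⁻¹ - (N:ℝ)⁻¹) =
          (l * ((N / l : ℕ) : ℝ) + l - N) / (N * l) := by field_simp; ring
        rw [this]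
        exact div_nonneg (by linarith) (by positivity)
      · filter_upwards [Filter.eventually_ge_atTop 1] with N hN
        have hN0 : (0:ℝ) < N := by exact_mod_cast hN
        have h4 : (((N / l : ℕ) : ℝ)) ≤ N / l := Nat.cast_div_le
        calc (N:ℝ)⁻¹ * ((N / l : ℕ) : ℝ) ≤ (N:ℝ)⁻¹ * (N / l) := by gcongr
          _ = (l:ℝ)⁻¹ := by field_simp
    have := h1.mul_const R
    simp only [mul_assoc] at this
    rwa [inv_mul_eq_div] at this
  rw [← hlim.liminf_eq, hL]
  refine Filter.liminf_le_liminf ?_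
  filter_upwards [hb] with N hN
  rw [EReal.coe_mul]
  exact mul_le_mul_of_nonneg_left hN (by exact_mod_cast inv_nonneg.2 (Nat.cast_nonneg N))

lemma conv_eps {dA dB : ℕ}
    {E F : Matrix (Fin dA) (Fin dA) ℂ →ₗ[ℂ] Matrix (Fin dB) (Fin dB) ℂ}
    (hE : Good E) (hF : Good F) {r : ℝ} (hr : regRelEntropy E F < (r : EReal))
    {ε : ℝ} (hε : 0 < ε) (hε3 : ε < 1/3) :
    Filter.limsup (fun k : ℕ => (((k : ℝ)⁻¹ : ℝ) : EReal) *
          chDiv (dHD ε) (tpowChannel E k) (tpowChannel F k)) Filter.atTop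
      ≤ ((r / (1 - 3 * ε) : ℝ) : EReal) := by
  have hpos : 0 < 1 - 3 * ε := by linarith
  set c := Real.logb 2 (2 / ε) with hc
  have hlim : Filter.Tendsto (fun N : ℕ => (((N:ℝ)⁻¹ * ((N * r + 3) / (1 - 3 * ε) + c) : ℝ) : EReal))
      Filter.atTop (nhds ((r / (1 - 3 * ε) : ℝ) : EReal)) := by
    rw [EReal.tendsto_coe]
    have h1 : Filter.Tendsto (fun N : ℕ => r / (1 - 3 * ε) + (N:ℝ)⁻¹ * (3 / (1 - 3 * ε) + c))
        Filter.atTop (nhds (r / (1 - 3 * ε) + 0 * (3 / (1 - 3 * ε) + c))) :=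
      tendsto_const_nhds.add ((tendsto_inv_atTop_nhds_zero_nat (𝕜 := ℝ)).mul_const _)
    rw [zero_mul, add_zero] at h1
    refine h1.congr' ?_
    filter_upwards [Filter.eventually_ge_atTop 1] with N hN
    have hN0 : (0:ℝ) < N := by exact_mod_cast hN
    field_simp
    ring
  rw [← hlim.limsup_eq]
  refine Filter.limsup_le_limsup ?_
  filter_upwards [Filter.eventually_ge_atTop 1] with N hN
  have hN0 : (0:ℝ) < N := by exact_mod_cast hN
  rw [EReal.coe_mul]
  refine mul_le_mul_of_nonneg_left ?_ (by exact_mod_cast (inv_pos.2 hN0).le)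
  have hreg : chDiv relD (tpowChannel E N) (tpowChannel F N) ≤ ((N * r : ℝ) : EReal) := by
    have h1 : (((N : ℝ)⁻¹ : ℝ) : EReal) * chDiv relD (tpowChannel E N) (tpowChannel F N) ≤ r := by
      refine le_trans ?_ hr.le
      unfold regRelEntropy
      exact le_iSup_of_le N (le_iSup_of_le hN le_rfl)
    have h2 := mul_le_mul_of_nonneg_left h1
      (show (0:EReal) ≤ ((N:ℝ) : EReal) by exact_mod_cast hN0.le)
    rwa [← mul_assoc, ← EReal.coe_mul, mul_inv_cancel₀ hN0.ne', EReal.coe_one, one_mul,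
      ← EReal.coe_mul] at h2
  refine iSup_le fun k => iSup_le fun hk => iSup_le fun ν => iSup_le fun hν => ?_
  refine dH_le_state (state_block (good_tpow hE N) hν) (state_block (good_tpow hF N) hν) ?_ hε hε3
  refine le_trans ?_ hreg
  exact le_iSup_of_le k (le_iSup_of_le hk (le_iSup_of_le ν (le_iSup_of_le hν le_rfl)))

lemma conv_part {dA dB : ℕ}
    {E F : Matrix (Fin dA) (Fin dA) ℂ →ₗ[ℂ] Matrix (Fin dB) (Fin dB) ℂ}
    (hE : Good E) (hF : Good F) :
    (⨅ ε : {e : ℝ // 0 < e ∧ e < 1},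
        Filter.limsup (fun k : ℕ => (((k : ℝ)⁻¹ : ℝ) : EReal) *
          chDiv (dHD ε.1) (tpowChannel E k) (tpowChannel F k)) Filter.atTop)
      ≤ regRelEntropy E F := by
  rw [← EReal.le_of_forall_lt_iff_le]
  intro r hr
  have hlim : Filter.Tendsto (fun ε : ℝ => ((r / (1 - 3 * ε) : ℝ) : EReal))
      (nhdsWithin 0 (Set.Ioi 0)) (nhds (r : EReal)) := by
    rw [EReal.tendsto_coe]
    have : ContinuousAt (fun ε : ℝ => r / (1 - 3 * ε)) 0 := by
      refine ContinuousAt.div ?_ ?_ ?_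
      · fun_prop
      · fun_prop
      · norm_num
    have h2 := this.tendsto
    simp only [mul_zero, sub_zero, div_one] at h2
    exact h2.mono_left nhdsWithin_le_nhds
  refine ge_of_tendsto hlim ?_
  have hmem : Set.Ioo (0:ℝ) (1/3) ∈ nhdsWithin (0:ℝ) (Set.Ioi 0) :=
    Ioo_mem_nhdsGT (by norm_num)
  filter_upwards [hmem] with ε hε
  exact iInf_le_of_le ⟨ε, hε.1, by linarith [hε.2]⟩ (conv_eps hE hF hr hε.1 hε.2)

/-- Stein's lemma for parallel channel discrimination. -/
theorem steins_lemma_parallel {dA dB : ℕ}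
    (E F : Matrix (Fin dA) (Fin dA) ℂ →ₗ[ℂ] Matrix (Fin dB) (Fin dB) ℂ)
    (hE : IsQChannel E) (hF : IsQChannel F) :
    (⨅ ε : {e : ℝ // 0 < e ∧ e < 1},
        Filter.limsup (fun k : ℕ => (((k : ℝ)⁻¹ : ℝ) : EReal) *
          chDiv (dHD ε.1) (tpowChannel E k) (tpowChannel F k)) Filter.atTop)
      = regRelEntropy E F ∧
    (⨅ ε : {e : ℝ // 0 < e ∧ e < 1},
        Filter.liminf (fun k : ℕ => (((k : ℝ)⁻¹ : ℝ) : EReal) *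
          chDiv (dHD ε.1) (tpowChannel E k) (tpowChannel F k)) Filter.atTop)
      = regRelEntropy E F := by
  have gE := good_of_channel hE
  have gF := good_of_channel hF
  have h1 := conv_part gE gF
  have h2 : regRelEntropy E F ≤ (⨅ ε : {e : ℝ // 0 < e ∧ e < 1},
        Filter.liminf (fun k : ℕ => (((k : ℝ)⁻¹ : ℝ) : EReal) *
          chDiv (dHD ε.1) (tpowChannel E k) (tpowChannel F k)) Filter.atTop) :=
    le_iInf fun ε => ach_part gE gF ε.2.1
  have h3 : (⨅ ε : {e : ℝ // 0 < e ∧ e < 1},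
        Filter.liminf (fun k : ℕ => (((k : ℝ)⁻¹ : ℝ) : EReal) *
          chDiv (dHD ε.1) (tpowChannel E k) (tpowChannel F k)) Filter.atTop) ≤
      (⨅ ε : {e : ℝ // 0 < e ∧ e < 1},
        Filter.limsup (fun k : ℕ => (((k : ℝ)⁻¹ : ℝ) : EReal) *
          chDiv (dHD ε.1) (tpowChannel E k) (tpowChannel F k)) Filter.atTop) :=
    iInf_mono fun ε => Filter.liminf_le_limsup
  exact ⟨le_antisymm h1 (h2.trans h3), le_antisymm (h3.trans h1) h2⟩

end QCD
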